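/- arXiv:2412.07297 — 2 statements merged into one kernel-verified Lean document; each statement's English description precedes it below -/
import Mathlib

section
/- For every palette 𝒫 there exists a family ℱ of 3-graphs with π_{ee}(ℱ) = Λ^{ee}_𝒫; that is, Λ^pal_{ee} ⊆ Π^(3)_{ee,∞}. -/
/-!
The family is `𝓕 = {F | F does not satisfy P}`. Since satisfying `P` is inherited by
subhypergraphs, a graph is `𝓕`-free exactly when it satisfies `P`. The empty palette has no
weightings and is treated separately (`piEE_univ`).

**Lower bound** (`lower_bound`). Given a weighting `p`, colour the pairs of `{0, …, n-1}`
independently at random according to `p`, and take all triples whose colour pattern lies in `P`.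
A second-moment computation (`exists_quasirandom`) and Cauchy-Schwarz (`discrepancy`) give a
colouring in which, uniformly over all product sets `A × B`, each colour `c` has density `p c` up
to `o(n²)`. Fix the middle vertex `y` and partition the two neighbourhoods by their position
relative to `y` and by the colour towards `y`: on each part the link of `y` contains all pairs
whose colour completes a triple of `P`, hence has density at least the corresponding codegree sum
(`link_bound`).

**Upper bound** (`upper_bound`). Take a sequence of graphs `H k` satisfying `P`, with `|H k| → ∞`
and uniformity error tending to `0`, and measure everything along a nonprincipal ultrafilter.
Cut the ordered vertex set into `m` intervals and shrink them to large subsets so that the number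
of abundant colours between pairs is minimal (`exists_robust`). Then each colour abundant between
two of the sets stays abundant between all large subsets. By Ramsey's theorem five of the sets,
`V 0 < V 1 < V 2 < V 3 < V 4`, have the same set `S` of abundant colours for all pairs.

For `a, b ∈ S` and `j ∈ {0, 2, 4}` there is a vertex `y ∈ V j` with dense link and large
neighbourhoods of colours `a` in `V 1` and `b` in `V 3`: by `card_bad_le` few vertices have a
sparse link. All edges of that link between the two neighbourhoods have a colour completing
`a, b` to a triple of `P`, in the position prescribed by `j`. After restricting to the
neighbourhoods, these colours have density at least `d - o(1)` between all large subsets. There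
are finitely many choices of `a, b, j`, so all the restrictions can be made one after another, and
the limiting colour densities between the final subsets of `V 1` and `V 3` form a weighting `x`
with `lamEE P x ≥ d` (`exists_weighting_of_five`).
-/

open Finset

/-- A 3-uniform hypergraph: a finite vertex set (of naturals) together with a set of
3-element subsets of it as edges. -/
structure ThreeGraph where
  verts : Finset ℕ
  edges : Finset (Finset ℕ)
  edge_sub : ∀ e ∈ edges, e ⊆ verts
  edge_card : ∀ e ∈ edges, e.card = 3

/-- `F` occurs as a subhypergraph of `H`. -/
def IsSubhypergraph (F H : ThreeGraph) : Prop :=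
  ∃ f : ℕ → ℕ, Set.InjOn f ↑F.verts ∧ (∀ v ∈ F.verts, f v ∈ H.verts) ∧
    ∀ e ∈ F.edges, e.image f ∈ H.edges

noncomputable section

/-- Number of triples `(x,y,z) ∈ X × Y × Z` with `{x,y,z}` an edge of `H`. -/
def eVVV (H : ThreeGraph) (X Y Z : Finset ℕ) : ℕ :=
  ((X ×ˢ Y ×ˢ Z).filter fun p => ({p.1, p.2.1, p.2.2} : Finset ℕ) ∈ H.edges).card

/-- `H` is `(d,η,▽)`-dense. -/
def IsDenseVVV (H : ThreeGraph) (d η : ℝ) : Prop :=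
  ∀ X Y Z : Finset ℕ, X ⊆ H.verts → Y ⊆ H.verts → Z ⊆ H.verts →
    (eVVV H X Y Z : ℝ) ≥ d * X.card * Y.card * Z.card - η * (H.verts.card : ℝ) ^ 3

/-- Number of ordered triples `(x,y,z)` with `x ∈ X`, `{y,z} ∈ P` and `{x,y,z}` an edge. -/
def eEV (H : ThreeGraph) (X : Finset ℕ) (P : Finset (Finset ℕ)) : ℕ :=
  ((X ×ˢ H.verts ×ˢ H.verts).filter fun p =>
    ({p.2.1, p.2.2} : Finset ℕ) ∈ P ∧ ({p.1, p.2.1, p.2.2} : Finset ℕ) ∈ H.edges).card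

/-- `H` is `(d,η,e↦v)`-dense. -/
def IsDenseEV (H : ThreeGraph) (d η : ℝ) : Prop :=
  ∀ (X : Finset ℕ) (P : Finset (Finset ℕ)), X ⊆ H.verts →
    (∀ p ∈ P, p ⊆ H.verts ∧ p.card = 2) →
    (eEV H X P : ℝ) ≥ d * X.card * P.card - η * (H.verts.card : ℝ) ^ 3

/-- `K_{ee}(P,Q)`: ordered triples `(x,y,z)` with `{x,y} ∈ P` and `{y,z} ∈ Q`. -/
def KEE (H : ThreeGraph) (P Q : Finset (Finset ℕ)) : Finset (ℕ × ℕ × ℕ) :=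
  (H.verts ×ˢ H.verts ×ˢ H.verts).filter fun p =>
    ({p.1, p.2.1} : Finset ℕ) ∈ P ∧ ({p.2.1, p.2.2} : Finset ℕ) ∈ Q

/-- Number of triples in `K_{ee}(P,Q)` forming an edge of `H`. -/
def eEE (H : ThreeGraph) (P Q : Finset (Finset ℕ)) : ℕ :=
  ((KEE H P Q).filter fun p => ({p.1, p.2.1, p.2.2} : Finset ℕ) ∈ H.edges).card

/-- `H` is `(d,η,ee)`-dense. -/
def IsDenseEE (H : ThreeGraph) (d η : ℝ) : Prop :=
  ∀ P Q : Finset (Finset ℕ),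
    (∀ p ∈ P, p ⊆ H.verts ∧ p.card = 2) → (∀ q ∈ Q, q ⊆ H.verts ∧ q.card = 2) →
    (eEE H P Q : ℝ) ≥ d * (KEE H P Q).card - η * (H.verts.card : ℝ) ^ 3

/-- The uniform Turán density `π_▽(𝓕)` of a family `𝓕` of 3-graphs. -/
def piVVV (𝓕 : Set ThreeGraph) : ℝ :=
  sSup {d : ℝ | 0 ≤ d ∧ d ≤ 1 ∧ ∀ η : ℝ, 0 < η → ∀ n : ℕ,
    ∃ H : ThreeGraph, n ≤ H.verts.card ∧ (∀ F ∈ 𝓕, ¬ IsSubhypergraph F H) ∧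
      IsDenseVVV H d η}

/-- The uniform Turán density `π_{e↦v}(𝓕)` of a family `𝓕` of 3-graphs. -/
def piEV (𝓕 : Set ThreeGraph) : ℝ :=
  sSup {d : ℝ | 0 ≤ d ∧ d ≤ 1 ∧ ∀ η : ℝ, 0 < η → ∀ n : ℕ,
    ∃ H : ThreeGraph, n ≤ H.verts.card ∧ (∀ F ∈ 𝓕, ¬ IsSubhypergraph F H) ∧
      IsDenseEV H d η}

/-- The uniform Turán density `π_{ee}(𝓕)` of a family `𝓕` of 3-graphs. -/
def piEE (𝓕 : Set ThreeGraph) : ℝ :=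
  sSup {d : ℝ | 0 ≤ d ∧ d ≤ 1 ∧ ∀ η : ℝ, 0 < η → ∀ n : ℕ,
    ∃ H : ThreeGraph, n ≤ H.verts.card ∧ (∀ F ∈ 𝓕, ¬ IsSubhypergraph F H) ∧
      IsDenseEE H d η}

/-- A palette: a finite set of ordered triples of natural numbers (colours). -/
abbrev Palette := Finset (ℕ × ℕ × ℕ)

/-- The set of colours `Φ(𝒫)` of a palette. -/
def palColours (P : Palette) : Finset ℕ :=
  P.image (·.1) ∪ P.image (·.2.1) ∪ P.image (·.2.2)

/-- A weighting of a palette: nonnegative weights on the colours summing to 1. -/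
def IsWeighting (P : Palette) (x : ℕ → ℝ) : Prop :=
  (∀ a ∈ palColours P, 0 ≤ x a) ∧ ∑ a ∈ palColours P, x a = 1

/-- `λ^▽_𝒫(x) = Σ_{(a,b,c) ∈ 𝒫} x_a x_b x_c`. -/
def lamVVV (P : Palette) (x : ℕ → ℝ) : ℝ :=
  ∑ p ∈ P, x p.1 * x p.2.1 * x p.2.2

/-- The palette Lagrangian `Λ^▽_𝒫`. -/
def LambdaVVV (P : Palette) : ℝ :=
  sSup {l : ℝ | ∃ x : ℕ → ℝ, IsWeighting P x ∧ l = lamVVV P x}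

/-- The ordered degree Lagrangian `λ^a_𝒫(x)`. -/
def lamDeg (P : Palette) (a : ℕ) (x : ℕ → ℝ) : ℝ :=
  min (min (∑ p ∈ P.filter (fun p => p.1 = a), x p.2.1 * x p.2.2)
           (∑ p ∈ P.filter (fun p => p.2.1 = a), x p.1 * x p.2.2))
      (∑ p ∈ P.filter (fun p => p.2.2 = a), x p.1 * x p.2.1)

/-- `λ^{e↦v}_𝒫(x)`: minimum of `λ^a_𝒫(x)` over colours `a` with positive weight. -/
def lamEV (P : Palette) (x : ℕ → ℝ) : ℝ :=
  sInf {l : ℝ | ∃ a ∈ palColours P, 0 < x a ∧ l = lamDeg P a x}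

/-- The palette Lagrangian `Λ^{e↦v}_𝒫`. -/
def LambdaEV (P : Palette) : ℝ :=
  sSup {l : ℝ | ∃ x : ℕ → ℝ, IsWeighting P x ∧ l = lamEV P x}

/-- The ordered codegree Lagrangian `λ^{a,b}_𝒫(x)`. -/
def lamCodeg (P : Palette) (a b : ℕ) (x : ℕ → ℝ) : ℝ :=
  min (min (min (∑ p ∈ P.filter (fun p => p.1 = a ∧ p.2.1 = b), x p.2.2)
                (∑ p ∈ P.filter (fun p => p.1 = b ∧ p.2.1 = a), x p.2.2))
           (min (∑ p ∈ P.filter (fun p => p.1 = a ∧ p.2.2 = b), x p.2.1)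
                (∑ p ∈ P.filter (fun p => p.1 = b ∧ p.2.2 = a), x p.2.1)))
      (min (∑ p ∈ P.filter (fun p => p.2.1 = a ∧ p.2.2 = b), x p.1)
           (∑ p ∈ P.filter (fun p => p.2.1 = b ∧ p.2.2 = a), x p.1))

/-- `λ^{ee}_𝒫(x)`: minimum of `λ^{a,b}_𝒫(x)` over colours `a,b` with positive weight. -/
def lamEE (P : Palette) (x : ℕ → ℝ) : ℝ :=
  sInf {l : ℝ | ∃ a ∈ palColours P, ∃ b ∈ palColours P, 0 < x a * x b ∧ l = lamCodeg P a b x}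

/-- The palette Lagrangian `Λ^{ee}_𝒫`. -/
def LambdaEE (P : Palette) : ℝ :=
  sSup {l : ℝ | ∃ x : ℕ → ℝ, IsWeighting P x ∧ l = lamEE P x}

/-- A 3-graph `H` satisfies a palette `P`: there is an ordering of the vertices (an
injection `ord` into `ℕ`) and a colouring `φ` of the pairs of vertices with colours in
`Φ(P)` such that the ordered shadow of every edge is a triple of the palette. -/
def Satisfies (H : ThreeGraph) (P : Palette) : Prop :=
  ∃ (ord : ℕ → ℕ) (φ : Finset ℕ → ℕ),
    Set.InjOn ord ↑H.verts ∧
    (∀ u ∈ H.verts, ∀ v ∈ H.verts, u ≠ v → φ {u, v} ∈ palColours P) ∧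
    ∀ u v w : ℕ, ({u, v, w} : Finset ℕ) ∈ H.edges →
      ord u < ord v → ord v < ord w →
      (φ {u, v}, φ {v, w}, φ {u, w}) ∈ P

/-- Delete a set of edges from a 3-graph. -/
def ThreeGraph.deleteEdges (H : ThreeGraph) (R : Finset (Finset ℕ)) : ThreeGraph where
  verts := H.verts
  edges := H.edges \ R
  edge_sub := fun e he => H.edge_sub e (Finset.mem_sdiff.mp he).1
  edge_card := fun e he => H.edge_card e (Finset.mem_sdiff.mp he).1

/-- `H` α-almost satisfies `P`: one can remove at most `α·|V(H)|³` edges so that the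
resulting 3-graph satisfies `P`. -/
def AlmostSatisfies (H : ThreeGraph) (P : Palette) (α : ℝ) : Prop :=
  ∃ R ⊆ H.edges, (R.card : ℝ) ≤ α * (H.verts.card : ℝ) ^ 3 ∧
    Satisfies (H.deleteEdges R) P

/-- The Lagrange polynomial `λ_F(x) = 3! Σ_{e ∈ E(F)} Π_{v ∈ e} x_v` of a 3-graph. -/
def lagrangePoly (F : ThreeGraph) (x : ℕ → ℝ) : ℝ :=
  6 * ∑ e ∈ F.edges, ∏ v ∈ e, x v

/-- The Lagrangian `Λ_F` of a 3-graph: the supremum of the Lagrange polynomial over the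
standard simplex on the vertices. -/
def lagrangian (F : ThreeGraph) : ℝ :=
  sSup {l : ℝ | ∃ x : ℕ → ℝ, (∀ v ∈ F.verts, 0 ≤ x v ∧ x v ≤ 1) ∧
    (∑ v ∈ F.verts, x v = 1) ∧ l = lagrangePoly F x}

end

namespace PaletteEE

/-! ### Quasirandom colourings -/

/-- The centred indicator of colour `c` on the pair `x < z`, extended by zero. -/
def dev (p : ℕ → ℝ) (f : ℕ → ℕ → ℕ) (c x z : ℕ) : ℝ :=
  if x < z then (if f x z = c then 1 else 0) - p c else 0

/-- A product of four centred independent factors has mean zero as soon as one index `e₁` occurs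
only once. The expectation over independent `p`-distributed colours is written as a weighted sum
over all colourings `ω`. -/
lemma expect_zero {ι : Type*} [Fintype ι] [DecidableEq ι] (Φ : Finset ℕ) (p g : ℕ → ℝ)
    (hg : ∑ c ∈ Φ, p c * g c = 0) (e₁ e₂ e₃ e₄ : ι)
    (h2 : e₂ ≠ e₁) (h3 : e₃ ≠ e₁) (h4 : e₄ ≠ e₁) :
    ∑ ω ∈ Fintype.piFinset (fun _ : ι => Φ),
      (∏ e, p (ω e)) * (g (ω e₁) * g (ω e₂) * g (ω e₃) * g (ω e₄)) = 0 := by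
  have key : ∀ ω : ι → ℕ, (∏ e, p (ω e)) * (g (ω e₁) * g (ω e₂) * g (ω e₃) * g (ω e₄)) =
      ∏ e, (p (ω e) * ((if e = e₁ then g (ω e) else 1) * (if e = e₂ then g (ω e) else 1) *
        (if e = e₃ then g (ω e) else 1) * (if e = e₄ then g (ω e) else 1))) := by
    intro ω
    simp only [Finset.prod_mul_distrib, Finset.prod_ite_eq', Finset.mem_univ, if_true]
  simp_rw [key]
  rw [← Finset.prod_univ_sum (fun _ : ι => Φ) (fun e c => p c * ((if e = e₁ then g c else 1) *
    (if e = e₂ then g c else 1) * (if e = e₃ then g c else 1) * (if e = e₄ then g c else 1)))]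
  apply Finset.prod_eq_zero (Finset.mem_univ e₁)
  simpa [h2.symm, h3.symm, h4.symm] using hg

lemma sum_weights {ι : Type*} [Fintype ι] [DecidableEq ι] (Φ : Finset ℕ) (p : ℕ → ℝ)
    (hs : ∑ c ∈ Φ, p c = 1) :
    ∑ ω ∈ Fintype.piFinset (fun _ : ι => Φ), (∏ e, p (ω e)) = 1 := by
  rw [← Finset.prod_univ_sum (fun _ : ι => Φ) (fun _ c => p c)]
  simp [hs]

/-- Some colouring using only colours of positive weight has small total squared codegree
deviation: for a random colouring each colour contributes at most `2 n³` in expectation, since the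
terms indexed by `x ≠ x'` and `z ≠ z'` vanish. -/
lemma exists_quasirandom (Φ : Finset ℕ) (p : ℕ → ℝ) (hp : ∀ c ∈ Φ, 0 ≤ p c)
    (hs : ∑ c ∈ Φ, p c = 1) (n : ℕ) :
    ∃ f : ℕ → ℕ → ℕ, (∀ x z, x < n → z < n → f x z ∈ Φ ∧ 0 < p (f x z)) ∧
      ∀ c ∈ Φ, ∑ x ∈ range n, ∑ x' ∈ range n,
        (∑ z ∈ range n, dev p f c x z * dev p f c x' z) ^ 2 ≤ 2 * #Φ * (n : ℝ) ^ 3 := by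
  classical
  have hp1 : ∀ c ∈ Φ, p c ≤ 1 := fun c hc => hs ▸ Finset.single_le_sum hp hc
  set Ω := Fintype.piFinset (fun _ : Fin n × Fin n => Φ) with hΩ
  let wt : (Fin n × Fin n → ℕ) → ℝ := fun ω => ∏ e, p (ω e)
  let g : ℕ → ℕ → ℝ := fun c a => (if a = c then 1 else 0) - p c
  let G : (Fin n × Fin n → ℕ) → ℕ → Fin n → Fin n → ℝ := fun ω c x z =>
    if x < z then g c (ω (x, z)) else 0
  let X : (Fin n × Fin n → ℕ) → ℕ → ℝ := fun ω c =>
    ∑ x, ∑ x', (∑ z, G ω c x z * G ω c x' z) ^ 2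
  have hwt0 : ∀ ω ∈ Ω, 0 ≤ wt ω := fun ω hω =>
    Finset.prod_nonneg fun e _ => hp _ (Fintype.mem_piFinset.1 hω e)
  have hwt1 : ∑ ω ∈ Ω, wt ω = 1 := sum_weights Φ p hs
  have hGabs : ∀ ω, ∀ c ∈ Φ, ∀ x z, |G ω c x z| ≤ 1 := by
    intro ω c hc x z
    have h0 := hp c hc
    have h1 := hp1 c hc
    simp only [G, g]
    split_ifs <;> exact abs_le.2 ⟨by linarith, by linarith⟩
  have hg0 : ∀ c ∈ Φ, ∑ a ∈ Φ, p a * g c a = 0 := by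
    intro c hc
    simp only [g, mul_sub, Finset.sum_sub_distrib, ← Finset.sum_mul, hs]
    simp [hc]
  have hX : ∀ c ∈ Φ, ∑ ω ∈ Ω, wt ω * X ω c ≤ 2 * (n : ℝ) ^ 3 := by
    intro c hc
    have hterm : ∀ x x' z z' : Fin n,
        ∑ ω ∈ Ω, wt ω * (G ω c x z * G ω c x' z * (G ω c x z' * G ω c x' z')) ≤
          (if x = x' then 1 else 0) + (if z = z' then 1 else 0) := by
      intro x x' z z'
      have hle : ∑ ω ∈ Ω, wt ω * (G ω c x z * G ω c x' z * (G ω c x z' * G ω c x' z')) ≤ 1 := by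
        rw [← hwt1]
        apply Finset.sum_le_sum
        intro ω hω
        apply mul_le_of_le_one_right (hwt0 ω hω)
        apply (le_abs_self _).trans
        simp only [abs_mul]
        have := hGabs ω c hc
        exact mul_le_one₀ (mul_le_one₀ (this _ _) (abs_nonneg _) (this _ _)) (by positivity)
          (mul_le_one₀ (this _ _) (abs_nonneg _) (this _ _))
      by_cases hx : x = x'
      · simp only [hx, if_true] at hle ⊢
        split_ifs <;> linarith
      by_cases hz : z = z'
      · simp only [hz, if_true] at hle ⊢
        split_ifs <;> linarith
      simp only [hx, hz, if_false, add_zero]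
      by_cases hall : x < z ∧ x' < z ∧ x < z' ∧ x' < z'
      · obtain ⟨h1, h2, h3, h4⟩ := hall
        have := expect_zero Φ p (g c) (hg0 c hc) (x, z) (x', z) (x, z') (x', z')
          (by simp [Ne.symm hx]) (by simp [Ne.symm hz]) (by simp [Ne.symm hx])
        simp only [G, h1, h2, h3, h4, if_true]
        refine le_of_eq (Eq.trans (Finset.sum_congr rfl fun ω _ => ?_) this)
        simp only [wt]; ring
      · apply le_of_eq
        apply Finset.sum_eq_zero
        intro ω _
        by_cases h1 : x < z
        · by_cases h2 : x' < z
          · by_cases h3 : x < z'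
            · have h4 : ¬ x' < z' := fun h4 => hall ⟨h1, h2, h3, h4⟩
              simp [G, h4]
            · simp [G, h3]
          · simp [G, h2]
        · simp [G, h1]
    have hexp : ∑ ω ∈ Ω, wt ω * X ω c = ∑ x, ∑ x', ∑ z, ∑ z', ∑ ω ∈ Ω,
        wt ω * (G ω c x z * G ω c x' z * (G ω c x z' * G ω c x' z')) := by
      simp only [X, sq, Finset.sum_mul_sum]
      simp only [Finset.mul_sum]
      rw [Finset.sum_comm]
      refine Finset.sum_congr rfl fun x _ => ?_
      rw [Finset.sum_comm]
      refine Finset.sum_congr rfl fun x' _ => ?_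
      rw [Finset.sum_comm]
      refine Finset.sum_congr rfl fun z _ => ?_
      exact Finset.sum_comm
    rw [hexp]
    calc _ ≤ ∑ x : Fin n, ∑ x' : Fin n, ∑ z : Fin n, ∑ z' : Fin n,
          (((if x = x' then 1 else 0) + (if z = z' then 1 else 0) : ℝ)) :=
          Finset.sum_le_sum fun x _ => Finset.sum_le_sum fun x' _ => Finset.sum_le_sum
            fun z _ => Finset.sum_le_sum fun z' _ => hterm x x' z z'
      _ = 2 * (n : ℝ) ^ 3 := by
          simp [Finset.sum_add_distrib]
          ring
  -- a colouring of weight zero could use colours of weight zero, so only positive ones qualify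
  obtain ⟨ω, hω, hpos, hle⟩ : ∃ ω ∈ Ω, 0 < wt ω ∧ ∑ c ∈ Φ, X ω c ≤ 2 * #Φ * (n : ℝ) ^ 3 := by
    by_contra! hcon
    have h1 : ∑ ω ∈ Ω, wt ω * ∑ c ∈ Φ, X ω c ≤ 2 * #Φ * (n : ℝ) ^ 3 := by
      simp only [Finset.mul_sum]
      rw [Finset.sum_comm]
      calc _ ≤ ∑ c ∈ Φ, 2 * (n : ℝ) ^ 3 := Finset.sum_le_sum hX
        _ = _ := by simp; ring
    have h2 : ∑ ω ∈ Ω, wt ω * (2 * #Φ * (n : ℝ) ^ 3) < ∑ ω ∈ Ω, wt ω * ∑ c ∈ Φ, X ω c := by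
      apply Finset.sum_lt_sum
      · intro ω hω
        rcases (hwt0 ω hω).eq_or_lt with h | h
        · simp [← h]
        · exact mul_le_mul_of_nonneg_left (hcon ω hω h).le h.le
      · have : ∃ ω ∈ Ω, 0 < wt ω := by
          by_contra! h
          have := Finset.sum_nonpos h
          linarith
        obtain ⟨ω, hω, h⟩ := this
        exact ⟨ω, hω, mul_lt_mul_of_pos_left (hcon ω hω h) h⟩
    rw [← Finset.sum_mul, hwt1] at h2
    linarith
  have hωp : ∀ e, 0 < p (ω e) := by
    intro e
    refine lt_of_le_of_ne (hp _ (Fintype.mem_piFinset.1 hω e)) fun h => ?_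
    exact hpos.ne' (Finset.prod_eq_zero (Finset.mem_univ e) h.symm)
  refine ⟨fun x z => if h : x < n ∧ z < n then ω (⟨x, h.1⟩, ⟨z, h.2⟩) else 0, ?_, ?_⟩
  · intro x z hx hz
    simp only [hx, hz, and_self, dif_pos]
    exact ⟨Fintype.mem_piFinset.1 hω _, hωp _⟩
  · intro c hc
    refine le_trans (le_of_eq ?_)
      ((Finset.single_le_sum (f := fun c => X ω c) (fun c _ => ?_) hc).trans hle)
    · simp only [Finset.sum_range, X, G, g, dev, Fin.is_lt, and_self, dif_pos, Fin.lt_def]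
    · exact Finset.sum_nonneg fun _ _ => Finset.sum_nonneg fun _ _ => sq_nonneg _

/-- Small squared codegree deviation forces small discrepancy on all product sets, by two
applications of the Cauchy-Schwarz inequality. -/
lemma discrepancy {Φ : Finset ℕ} {p : ℕ → ℝ} {n : ℕ} {f : ℕ → ℕ → ℕ} {c : ℕ}
    (h : ∑ x ∈ range n, ∑ x' ∈ range n,
        (∑ z ∈ range n, dev p f c x z * dev p f c x' z) ^ 2 ≤ 2 * #Φ * (n : ℝ) ^ 3)
    {ε : ℝ} (hε : 0 < ε) (hn : 2 * #Φ ≤ ε ^ 4 * n)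
    {A B : Finset ℕ} (hA : A ⊆ range n) (hB : B ⊆ range n) :
    |∑ x ∈ A, ∑ z ∈ B, dev p f c x z| ≤ ε * (n : ℝ) ^ 2 := by
  set S := ∑ x ∈ A, ∑ z ∈ B, dev p f c x z with hS
  have hcard : ∀ {D : Finset ℕ}, D ⊆ range n → (#D : ℝ) ≤ n := fun hD => by
    have := Finset.card_le_card hD
    rw [card_range] at this
    exact_mod_cast this
  set T := ∑ x ∈ A, ∑ x' ∈ A, ∑ z ∈ range n, dev p f c x z * dev p f c x' z with hT
  have hT' : T = ∑ z ∈ range n, (∑ x ∈ A, dev p f c x z) ^ 2 := by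
    simp only [sq, Finset.sum_mul_sum]
    rw [hT, Finset.sum_comm (s := range n)]
    refine Finset.sum_congr rfl fun x _ => ?_
    rw [Finset.sum_comm]
  have h1 : S ^ 2 ≤ n * T := by
    rw [hS, Finset.sum_comm]
    refine sq_sum_le_card_mul_sum_sq.trans ?_
    refine mul_le_mul (hcard hB) ?_ (Finset.sum_nonneg fun _ _ => sq_nonneg _) (by positivity)
    rw [hT']
    exact Finset.sum_le_sum_of_subset_of_nonneg hB fun _ _ _ => sq_nonneg _
  have h2 : T ^ 2 ≤ n ^ 2 * (2 * #Φ * (n : ℝ) ^ 3) := by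
    rw [hT, ← Finset.sum_product']
    refine sq_sum_le_card_mul_sum_sq.trans ?_
    refine mul_le_mul ?_ ?_ (Finset.sum_nonneg fun _ _ => sq_nonneg _) (by positivity)
    · rw [card_product, sq]
      push_cast
      exact mul_le_mul (hcard hA) (hcard hA) (by positivity) (by positivity)
    · refine le_trans ?_ h
      rw [← Finset.sum_product']
      exact Finset.sum_le_sum_of_subset_of_nonneg (Finset.product_subset_product hA hA)
        fun _ _ _ => sq_nonneg _
  have hT0 : 0 ≤ T := by rw [hT']; exact Finset.sum_nonneg fun _ _ => sq_nonneg _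
  have h4 : |S| ^ 4 ≤ (ε * (n : ℝ) ^ 2) ^ 4 := by
    calc |S| ^ 4 = (S ^ 2) ^ 2 := by rw [← sq_abs S]; ring
      _ ≤ (n * T) ^ 2 := pow_le_pow_left₀ (sq_nonneg _) h1 2
      _ = n ^ 2 * T ^ 2 := by ring
      _ ≤ n ^ 2 * (n ^ 2 * (2 * #Φ * (n : ℝ) ^ 3)) := by gcongr
      _ ≤ n ^ 2 * (n ^ 2 * (ε ^ 4 * n * (n : ℝ) ^ 3)) := by gcongr
      _ = _ := by ring
  exact le_of_pow_le_pow_left₀ (by norm_num) (by positivity) h4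

/-! ### Graphs defined by colour patterns -/

open Classical in
/-- The 3-graph on `{0, …, n-1}` of all triples whose colour pattern under `f` lies in `P`. -/
noncomputable def patternGraph (P : Palette) (n : ℕ) (f : ℕ → ℕ → ℕ) : ThreeGraph where
  verts := range n
  edges := (powersetCard 3 (range n)).filter fun e =>
    ∃ u v w, u < v ∧ v < w ∧ e = {u, v, w} ∧ (f u v, f v w, f u w) ∈ P
  edge_sub := fun e he => (mem_powersetCard.1 (mem_filter.1 he).1).1
  edge_card := fun e he => (mem_powersetCard.1 (mem_filter.1 he).1).2

lemma mem_patternGraph {P : Palette} {n : ℕ} {f : ℕ → ℕ → ℕ} {u v w : ℕ}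
    (huv : u < v) (hvw : v < w) :
    ({u, v, w} : Finset ℕ) ∈ (patternGraph P n f).edges ↔
      w < n ∧ (f u v, f v w, f u w) ∈ P := by
  simp only [patternGraph, mem_filter, mem_powersetCard]
  constructor
  · rintro ⟨⟨hsub, -⟩, u', v', w', h1, h2, he, hP⟩
    rw [Finset.ext_iff] at he
    simp only [mem_insert, mem_singleton] at he
    have a1 := (he u').2 (by simp)
    have a2 := (he v').2 (by simp)
    have a3 := (he w').2 (by simp)
    obtain rfl : u = u' := by omega
    obtain rfl : v = v' := by omega
    obtain rfl : w = w' := by omega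
    exact ⟨mem_range.1 (hsub (by simp)), hP⟩
  · rintro ⟨hw, hP⟩
    refine ⟨⟨?_, ?_⟩, u, v, w, huv, hvw, rfl, hP⟩
    · intro a ha
      simp only [mem_insert, mem_singleton] at ha
      rw [mem_range]; omega
    · rw [card_eq_three]
      exact ⟨u, v, w, by omega, by omega, by omega, rfl⟩

lemma patternGraph_satisfies {P : Palette} {n : ℕ} {f : ℕ → ℕ → ℕ}
    (hf : ∀ x z, x < n → z < n → f x z ∈ palColours P) :
    Satisfies (patternGraph P n f) P := by
  have hpair : ∀ u v : ℕ, u < v → f (sInf ((({u, v} : Finset ℕ) : Set ℕ)))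
      (sSup ((({u, v} : Finset ℕ) : Set ℕ))) = f u v := by
    intro u v huv
    rw [coe_pair, csInf_pair, csSup_pair, inf_eq_left.2 huv.le, sup_eq_right.2 huv.le]
  -- a pair is coloured by reading off its smaller and its larger element
  refine ⟨id, fun s => f (sInf (s : Set ℕ)) (sSup (s : Set ℕ)), Function.injective_id.injOn,
    ?_, ?_⟩
  · intro u hu v hv huv
    have hu := mem_range.1 hu
    have hv := mem_range.1 hv
    rcases lt_or_gt_of_ne huv with h | h
    · simp only [hpair u v h]; exact hf u v hu hv
    · rw [pair_comm]; simp only [hpair v u h]; exact hf v u hv hu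
  · intro u v w he huv hvw
    simp only [id] at huv hvw
    simp only [hpair u v huv, hpair v w hvw, hpair u w (huv.trans hvw)]
    exact ((mem_patternGraph huv hvw).1 he).2

/-- Satisfying a palette passes to subhypergraphs, by pulling back the order and the colouring. -/
lemma Satisfies.mono {F H : ThreeGraph} {P : Palette} (hFH : IsSubhypergraph F H)
    (hH : Satisfies H P) : Satisfies F P := by
  obtain ⟨g, hinj, hv, he⟩ := hFH
  obtain ⟨ord, φ, h1, h2, h3⟩ := hH
  refine ⟨ord ∘ g, fun s => φ (s.image g), h1.comp hinj fun v => hv v, ?_, ?_⟩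
  · intro u hu v hv' huv
    simp only [image_insert, image_singleton]
    exact h2 _ (hv u hu) _ (hv v hv') fun h => huv (hinj hu hv' h)
  · intro u v w huvw h h'
    have := he _ huvw
    simp only [image_insert, image_singleton] at this ⊢
    exact h3 _ _ _ this h h'

/-! ### Codegree conditions as sums over colours -/

lemma fst_mem {P : Palette} {a b c : ℕ} (h : (a, b, c) ∈ P) : a ∈ palColours P := by
  simp only [palColours, mem_union, mem_image]
  exact Or.inl (Or.inl ⟨_, h, rfl⟩)

lemma snd_mem {P : Palette} {a b c : ℕ} (h : (a, b, c) ∈ P) : b ∈ palColours P := by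
  simp only [palColours, mem_union, mem_image]
  exact Or.inl (Or.inr ⟨_, h, rfl⟩)

lemma thd_mem {P : Palette} {a b c : ℕ} (h : (a, b, c) ∈ P) : c ∈ palColours P := by
  simp only [palColours, mem_union, mem_image]
  exact Or.inr ⟨_, h, rfl⟩

/-- The colours completing `a`, `b` to a triple of `P`; `i = 0, 1, 2` puts the missing
colour in the third, second, first entry respectively. -/
def completions (P : Palette) (i : Fin 3) (a b : ℕ) : Finset ℕ :=
  (palColours P).filter fun c =>
    (![(a, b, c), (a, c, b), (c, a, b)] : Fin 3 → ℕ × ℕ × ℕ) i ∈ P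

lemma mem_completions_zero {P : Palette} {a b c : ℕ} :
    c ∈ completions P 0 a b ↔ (a, b, c) ∈ P := by
  rw [completions, mem_filter]
  exact ⟨fun h => h.2, fun h => ⟨thd_mem h, h⟩⟩

lemma mem_completions_one {P : Palette} {a b c : ℕ} :
    c ∈ completions P 1 a b ↔ (a, c, b) ∈ P := by
  rw [completions, mem_filter]
  exact ⟨fun h => h.2, fun h => ⟨snd_mem h, h⟩⟩

lemma mem_completions_two {P : Palette} {a b c : ℕ} :
    c ∈ completions P 2 a b ↔ (c, a, b) ∈ P := by
  rw [completions, mem_filter]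
  exact ⟨fun h => h.2, fun h => ⟨fst_mem h, h⟩⟩

lemma completions_subset (P : Palette) (i a b) : completions P i a b ⊆ palColours P :=
  filter_subset _ _

lemma sum_thd (P : Palette) (x : ℕ → ℝ) (a b : ℕ) :
    ∑ p ∈ P.filter (fun p => p.1 = a ∧ p.2.1 = b), x p.2.2 =
      ∑ c ∈ completions P 0 a b, x c := by
  refine Finset.sum_nbij' (fun p => p.2.2) (fun c => (a, b, c)) ?_ ?_ ?_ ?_ ?_
  · rintro ⟨a', b', c⟩ h
    simp only [mem_filter] at h
    obtain ⟨h, rfl, rfl⟩ := h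
    simpa [mem_completions_zero] using h
  · intro c h
    simpa [mem_completions_zero] using h
  · rintro ⟨a', b', c⟩ h
    simp only [mem_filter] at h
    obtain ⟨h, rfl, rfl⟩ := h
    rfl
  · intros; rfl
  · intros; rfl

lemma sum_snd (P : Palette) (x : ℕ → ℝ) (a b : ℕ) :
    ∑ p ∈ P.filter (fun p => p.1 = a ∧ p.2.2 = b), x p.2.1 =
      ∑ c ∈ completions P 1 a b, x c := by
  refine Finset.sum_nbij' (fun p => p.2.1) (fun c => (a, c, b)) ?_ ?_ ?_ ?_ ?_
  · rintro ⟨a', c, b'⟩ h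
    simp only [mem_filter] at h
    obtain ⟨h, rfl, rfl⟩ := h
    simpa [mem_completions_one] using h
  · intro c h
    simpa [mem_completions_one] using h
  · rintro ⟨a', c, b'⟩ h
    simp only [mem_filter] at h
    obtain ⟨h, rfl, rfl⟩ := h
    rfl
  · intros; rfl
  · intros; rfl

lemma sum_fst (P : Palette) (x : ℕ → ℝ) (a b : ℕ) :
    ∑ p ∈ P.filter (fun p => p.2.1 = a ∧ p.2.2 = b), x p.1 =
      ∑ c ∈ completions P 2 a b, x c := by
  refine Finset.sum_nbij' (fun p => p.1) (fun c => (c, a, b)) ?_ ?_ ?_ ?_ ?_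
  · rintro ⟨c, a', b'⟩ h
    simp only [mem_filter] at h
    obtain ⟨h, rfl, rfl⟩ := h
    simpa [mem_completions_two] using h
  · intro c h
    simpa [mem_completions_two] using h
  · rintro ⟨c, a', b'⟩ h
    simp only [mem_filter] at h
    obtain ⟨h, rfl, rfl⟩ := h
    rfl
  · intros; rfl
  · intros; rfl

lemma le_lamCodeg_iff {P : Palette} {a b : ℕ} {x : ℕ → ℝ} {l : ℝ} :
    l ≤ lamCodeg P a b x ↔ ∀ i, l ≤ ∑ c ∈ completions P i a b, x c ∧
      l ≤ ∑ c ∈ completions P i b a, x c := by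
  simp only [lamCodeg, sum_thd, sum_snd, sum_fst, le_min_iff, Fin.forall_fin_succ]
  simp
  tauto

lemma lamCodeg_nonneg {P : Palette} {x : ℕ → ℝ} (hx : IsWeighting P x) (a b : ℕ) :
    0 ≤ lamCodeg P a b x :=
  le_lamCodeg_iff.2 fun _ =>
    ⟨Finset.sum_nonneg fun c hc => hx.1 c (mem_filter.1 hc).1,
      Finset.sum_nonneg fun c hc => hx.1 c (mem_filter.1 hc).1⟩

lemma sum_completions_le_one {P : Palette} {x : ℕ → ℝ} (hx : IsWeighting P x) (i a b) :
    ∑ c ∈ completions P i a b, x c ≤ 1 :=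
  hx.2 ▸ Finset.sum_le_sum_of_subset_of_nonneg (filter_subset _ _) fun c hc _ => hx.1 c hc

lemma lamEE_le_lamCodeg {P : Palette} {x : ℕ → ℝ} (hx : IsWeighting P x) {a b : ℕ}
    (ha : a ∈ palColours P) (hb : b ∈ palColours P) (hxa : 0 < x a) (hxb : 0 < x b) :
    lamEE P x ≤ lamCodeg P a b x := by
  apply csInf_le
  · refine ⟨0, ?_⟩
    rintro l ⟨a, -, b, -, -, rfl⟩
    exact lamCodeg_nonneg hx a b
  · exact ⟨a, ha, b, hb, mul_pos hxa hxb, rfl⟩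

lemma exists_pos_weight {P : Palette} {x : ℕ → ℝ} (hx : IsWeighting P x) :
    ∃ a ∈ palColours P, 0 < x a := by
  by_contra! h
  have := Finset.sum_nonpos h
  linarith [hx.2]

lemma lamEE_nonneg {P : Palette} {x : ℕ → ℝ} (hx : IsWeighting P x) : 0 ≤ lamEE P x := by
  apply Real.sInf_nonneg
  rintro l ⟨a, -, b, -, -, rfl⟩
  exact lamCodeg_nonneg hx a b

lemma lamEE_le_one {P : Palette} {x : ℕ → ℝ} (hx : IsWeighting P x) : lamEE P x ≤ 1 := by
  obtain ⟨a, ha, hxa⟩ := exists_pos_weight hx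
  exact ((le_lamCodeg_iff.1 (lamEE_le_lamCodeg hx ha ha hxa hxa) 0).1).trans
    (sum_completions_le_one hx _ _ _)

/-! ### The lower bound -/

/-- On a product set, discrepancy control for the colours in `C` forces a relative density of at
least `p(C)` among the increasing pairs, up to an additive error. -/
lemma block_bound {Φ C A B : Finset ℕ} {p : ℕ → ℝ} {f : ℕ → ℕ → ℕ} {n : ℕ} {e l : ℝ}
    (he : 0 ≤ e)
    (hD : ∀ c ∈ Φ, ∀ A B : Finset ℕ, A ⊆ range n → B ⊆ range n →
      |∑ x ∈ A, ∑ z ∈ B, dev p f c x z| ≤ e)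
    (hA : A ⊆ range n) (hB : B ⊆ range n) (hC : C ⊆ Φ) (I : ℕ → ℕ → ℝ)
    (hI0 : ∀ x z, 0 ≤ I x z)
    (hI : ∀ x ∈ A, ∀ z ∈ B, x < z → f x z ∈ C → 1 ≤ I x z) (hl : l ≤ ∑ c ∈ C, p c) :
    -(#Φ * e) ≤ ∑ x ∈ A, ∑ z ∈ B, if x < z then I x z - l else 0 := by
  have h1 : ∑ c ∈ C, ∑ x ∈ A, ∑ z ∈ B, dev p f c x z ≤
      ∑ x ∈ A, ∑ z ∈ B, if x < z then I x z - l else 0 := by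
    rw [Finset.sum_comm]
    refine Finset.sum_le_sum fun x hx => ?_
    rw [Finset.sum_comm]
    refine Finset.sum_le_sum fun z hz => ?_
    by_cases hxz : x < z
    · simp only [dev, hxz, if_true, Finset.sum_sub_distrib, Finset.sum_ite_eq]
      split_ifs with hc
      · linarith [hI x hx z hz hxz hc]
      · linarith [hI0 x z]
    · simp [dev, hxz]
  have h2 : ∑ c ∈ C, -e ≤ ∑ c ∈ C, ∑ x ∈ A, ∑ z ∈ B, dev p f c x z :=
    Finset.sum_le_sum fun c hc => (abs_le.1 (hD c (hC hc) A B hA hB)).1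
  rw [Finset.sum_const, nsmul_eq_mul] at h2
  have h3 : (#C : ℝ) * e ≤ #Φ * e :=
    mul_le_mul_of_nonneg_right (by exact_mod_cast Finset.card_le_card hC) he
  linarith

open Classical in
/-- The link of `y` in the pattern graph is relatively dense on the increasing pairs of any
product set: split the two sides according to the position relative to `y` and the colour of
the pair formed with `y`. -/
lemma link_bound {P : Palette} {p : ℕ → ℝ} (hp : IsWeighting P p) {n : ℕ} {f : ℕ → ℕ → ℕ}
    (hf : ∀ x z, x < n → z < n → f x z ∈ palColours P ∧ 0 < p (f x z)) {e : ℝ} (he : 0 ≤ e)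
    (hD : ∀ c ∈ palColours P, ∀ A B : Finset ℕ, A ⊆ range n → B ⊆ range n →
      |∑ x ∈ A, ∑ z ∈ B, dev p f c x z| ≤ e)
    {y : ℕ} (hy : y < n) {A B : Finset ℕ} (hA : A ⊆ range n) (hB : B ⊆ range n)
    (hyA : y ∉ A) (hyB : y ∉ B) :
    -(4 * (#(palColours P) : ℝ) ^ 3 * e) ≤ ∑ x ∈ A, ∑ z ∈ B, if x < z then
      (if ({x, y, z} : Finset ℕ) ∈ (patternGraph P n f).edges then (1 : ℝ) else 0)
        - lamEE P p else 0 := by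
  set Φ := palColours P with hΦ
  set l := lamEE P p with hl
  set I : ℕ → ℕ → ℝ := fun x z =>
    if ({x, y, z} : Finset ℕ) ∈ (patternGraph P n f).edges then (1 : ℝ) else 0 with hI
  have hI0 : ∀ x z, 0 ≤ I x z := fun x z => by simp only [hI]; split_ifs <;> norm_num
  -- `true` marks the vertices below `y`
  let col : ℕ → Bool × ℕ := fun x => if x < y then (true, f x y) else (false, f y x)
  have hcol : ∀ x ∈ range n, col x ∈ (univ : Finset Bool) ×ˢ Φ := by
    intro x hx
    have hx := mem_range.1 hx
    simp only [col, mem_product, mem_univ, true_and]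
    split_ifs
    · exact (hf x y hx hy).1
    · exact (hf y x hy hx).1
  have hlo : ∀ x, x ≠ y → ∀ a, col x = (true, a) → x < y ∧ f x y = a := by
    intro x hx a h
    simp only [col] at h
    split_ifs at h with h'
    · exact ⟨h', (Prod.mk.inj h).2⟩
    · simp at h
  have hhi : ∀ x, x ≠ y → ∀ a, col x = (false, a) → y < x ∧ f y x = a := by
    intro x hx a h
    simp only [col] at h
    split_ifs at h with h'
    · simp at h
    · exact ⟨by omega, (Prod.mk.inj h).2⟩
  have hmain : ∀ t ∈ (univ : Finset Bool) ×ˢ Φ, ∀ t' ∈ (univ : Finset Bool) ×ˢ Φ,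
      -(#Φ * e) ≤ ∑ x ∈ A with col x = t, ∑ z ∈ B with col z = t',
        if x < z then I x z - l else 0 := by
    rintro ⟨s, a⟩ ht ⟨s', b⟩ ht'
    have haΦ : a ∈ Φ := (mem_product.1 ht).2
    have hbΦ : b ∈ Φ := (mem_product.1 ht').2
    have htriv : -(#Φ * e) ≤ 0 := by
      have : 0 ≤ (#Φ : ℝ) * e := by positivity
      linarith
    rcases (A.filter (fun x => col x = (s, a))).eq_empty_or_nonempty with hAe | ⟨x₀, hx₀⟩
    · rw [hAe]; simpa using htriv
    rcases (B.filter (fun x => col x = (s', b))).eq_empty_or_nonempty with hBe | ⟨z₀, hz₀⟩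
    · rw [hBe]; simpa using htriv
    have hpos : ∀ x ∈ range n, x ≠ y → ∀ s a, col x = (s, a) → 0 < p a := by
      intro x hx hxy s a h
      have hx := mem_range.1 hx
      cases s
      · obtain ⟨-, rfl⟩ := hhi x hxy a h
        exact (hf y x hy hx).2
      · obtain ⟨-, rfl⟩ := hlo x hxy a h
        exact (hf x y hx hy).2
    have hA' : ∀ x ∈ A, x ≠ y := fun x hx h => hyA (h ▸ hx)
    have hB' : ∀ x ∈ B, x ≠ y := fun x hx h => hyB (h ▸ hx)
    rw [mem_filter] at hx₀ hz₀
    have hpa := hpos x₀ (hA hx₀.1) (hA' _ hx₀.1) s a hx₀.2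
    have hpb := hpos z₀ (hB hz₀.1) (hB' _ hz₀.1) s' b hz₀.2
    have hcod := le_lamCodeg_iff.1 (lamEE_le_lamCodeg hp haΦ hbΦ hpa hpb)
    obtain ⟨C, hC, hCl, hCI⟩ : ∃ C ⊆ Φ, l ≤ ∑ c ∈ C, p c ∧
        ∀ x ∈ A.filter (fun x => col x = (s, a)), ∀ z ∈ B.filter (fun x => col x = (s', b)),
          x < z → f x z ∈ C → 1 ≤ I x z := by
      have hone : ∀ x z, ({x, y, z} : Finset ℕ) ∈ (patternGraph P n f).edges → 1 ≤ I x z :=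
        fun x z h => by simp [hI, h]
      cases s <;> cases s'
      · refine ⟨_, completions_subset P 1 a b, (hcod 1).1, fun x hx z hz hxz hc => hone x z ?_⟩
        rw [mem_filter] at hx hz
        obtain ⟨h1, rfl⟩ := hhi x (hA' x hx.1) a hx.2
        obtain ⟨h2, rfl⟩ := hhi z (hB' z hz.1) b hz.2
        rw [Finset.insert_comm, mem_patternGraph h1 hxz]
        exact ⟨mem_range.1 (hB hz.1), mem_completions_one.1 hc⟩
      · refine ⟨_, completions_subset P 1 a b, (hcod 1).1, fun x hx z hz hxz hc => ?_⟩
        rw [mem_filter] at hx hz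
        obtain ⟨h1, -⟩ := hhi x (hA' x hx.1) a hx.2
        obtain ⟨h2, -⟩ := hlo z (hB' z hz.1) b hz.2
        omega
      · refine ⟨_, completions_subset P 0 a b, (hcod 0).1, fun x hx z hz hxz hc => hone x z ?_⟩
        rw [mem_filter] at hx hz
        obtain ⟨h1, rfl⟩ := hlo x (hA' x hx.1) a hx.2
        obtain ⟨h2, rfl⟩ := hhi z (hB' z hz.1) b hz.2
        rw [mem_patternGraph h1 h2]
        exact ⟨mem_range.1 (hB hz.1), mem_completions_zero.1 hc⟩
      · refine ⟨_, completions_subset P 2 b a, (hcod 2).2, fun x hx z hz hxz hc => hone x z ?_⟩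
        rw [mem_filter] at hx hz
        obtain ⟨h1, rfl⟩ := hlo x (hA' x hx.1) a hx.2
        obtain ⟨h2, rfl⟩ := hlo z (hB' z hz.1) b hz.2
        rw [Finset.pair_comm, mem_patternGraph hxz h2]
        exact ⟨hy, mem_completions_two.1 hc⟩
    exact block_bound he hD ((filter_subset _ _).trans hA) ((filter_subset _ _).trans hB)
      hC I hI0 hCI hCl
  have hsplit : ∑ x ∈ A, ∑ z ∈ B, (if x < z then I x z - l else 0) =
      ∑ t ∈ (univ : Finset Bool) ×ˢ Φ, ∑ t' ∈ (univ : Finset Bool) ×ˢ Φ,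
        ∑ x ∈ A with col x = t, ∑ z ∈ B with col z = t', if x < z then I x z - l else 0 := by
    rw [← Finset.sum_fiberwise_of_maps_to (fun x hx => hcol x (hA hx))]
    refine Finset.sum_congr rfl fun t _ => ?_
    rw [Finset.sum_comm (s := (univ : Finset Bool) ×ˢ Φ)]
    refine Finset.sum_congr rfl fun x _ => ?_
    rw [← Finset.sum_fiberwise_of_maps_to (fun x hx => hcol x (hB hx))]
  rw [hsplit]
  calc -(4 * (#Φ : ℝ) ^ 3 * e) = ∑ t ∈ (univ : Finset Bool) ×ˢ Φ,
        ∑ t' ∈ (univ : Finset Bool) ×ˢ Φ, -(#Φ * e) := by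
        simp only [Finset.sum_const, card_product, Finset.card_univ, Fintype.card_bool,
          nsmul_eq_mul]
        push_cast; ring
    _ ≤ _ := Finset.sum_le_sum fun t ht => Finset.sum_le_sum fun t' ht' => hmain t ht t' ht'

/-- A pattern graph of a colouring with small discrepancy is `ee`-dense. -/
lemma patternGraph_dense {P : Palette} {p : ℕ → ℝ} (hp : IsWeighting P p) {n : ℕ}
    {f : ℕ → ℕ → ℕ}
    (hf : ∀ x z, x < n → z < n → f x z ∈ palColours P ∧ 0 < p (f x z)) {e : ℝ} (he : 0 ≤ e)
    (hD : ∀ c ∈ palColours P, ∀ A B : Finset ℕ, A ⊆ range n → B ⊆ range n →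
      |∑ x ∈ A, ∑ z ∈ B, dev p f c x z| ≤ e) {η : ℝ}
    (hη : n * (8 * (#(palColours P) : ℝ) ^ 3 * e) + n ^ 2 ≤ η * (n : ℝ) ^ 3) :
    IsDenseEE (patternGraph P n f) (lamEE P p) η := by
  classical
  intro Q R hQ hR
  set H := patternGraph P n f with hH
  have hV : H.verts = range n := rfl
  set l := lamEE P p with hl
  have hl1 : l ≤ 1 := lamEE_le_one hp
  have hl0 : 0 ≤ l := lamEE_nonneg hp
  let I : ℕ → ℕ → ℕ → ℝ := fun y x z =>
    if ({x, y, z} : Finset ℕ) ∈ H.edges then (1 : ℝ) else 0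
  let A : ℕ → Finset ℕ := fun y => (range n).filter fun x => ({x, y} : Finset ℕ) ∈ Q
  let B : ℕ → Finset ℕ := fun y => (range n).filter fun z => ({y, z} : Finset ℕ) ∈ R
  have hA : ∀ y, A y ⊆ range n := fun y => filter_subset _ _
  have hB : ∀ y, B y ⊆ range n := fun y => filter_subset _ _
  have hyA : ∀ y, y ∉ A y := by
    intro y h
    have := (hQ _ (mem_filter.1 h).2).2
    simp at this
  have hyB : ∀ y, y ∉ B y := by
    intro y h
    have := (hR _ (mem_filter.1 h).2).2
    simp at this
  have hcard : ∀ D ⊆ range n, (#D : ℝ) ≤ n := fun D hD => by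
    have := Finset.card_le_card hD
    rw [card_range] at this
    exact_mod_cast this
  have hdiff : (eEE H Q R : ℝ) - l * #(KEE H Q R) =
      ∑ y ∈ range n, ∑ x ∈ A y, ∑ z ∈ B y, (I y x z - l) := by
    have h1 : (eEE H Q R : ℝ) - l * #(KEE H Q R) =
        ∑ t ∈ KEE H Q R, (I t.2.1 t.1 t.2.2 - l) := by
      simp only [eEE, I, Finset.sum_sub_distrib, Finset.sum_boole, Finset.sum_const,
        nsmul_eq_mul]
      ring
    rw [h1, KEE, hV, Finset.sum_filter, Finset.sum_product]
    simp only [Finset.sum_product]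
    rw [Finset.sum_comm]
    refine Finset.sum_congr rfl fun y _ => ?_
    simp only [A, B, Finset.sum_filter]
    refine Finset.sum_congr rfl fun x _ => ?_
    split_ifs with h <;> simp [h]
  have hy : ∀ y ∈ range n, -(8 * (#(palColours P) : ℝ) ^ 3 * e + n) ≤
      ∑ x ∈ A y, ∑ z ∈ B y, (I y x z - l) := by
    intro y hy
    have hyn := mem_range.1 hy
    have h1 := link_bound hp hf he hD hyn (hA y) (hB y) (hyA y) (hyB y)
    have h2 := link_bound hp hf he hD hyn (hB y) (hA y) (hyB y) (hyA y)
    rw [Finset.sum_comm] at h2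
    -- the degenerate triples `x = z` are no edges but number at most `n`
    have h3 : -(n : ℝ) ≤ ∑ x ∈ A y, ∑ z ∈ B y, (if x = z then I y x z - l else 0) := by
      calc -(n : ℝ) ≤ ∑ x ∈ A y, (-1 : ℝ) := by
            rw [Finset.sum_const, nsmul_eq_mul]; linarith [hcard _ (hA y)]
        _ ≤ _ := by
            refine Finset.sum_le_sum fun x _ => ?_
            rw [Finset.sum_ite_eq]
            have : 0 ≤ I y x x := by simp only [I]; split_ifs <;> norm_num
            split_ifs <;> linarith
    have h4 : ∑ x ∈ A y, ∑ z ∈ B y, (I y x z - l) =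
        (∑ x ∈ A y, ∑ z ∈ B y, if x < z then I y x z - l else 0) +
        (∑ x ∈ A y, ∑ z ∈ B y, if z < x then I y z x - l else 0) +
        ∑ x ∈ A y, ∑ z ∈ B y, (if x = z then I y x z - l else 0) := by
      simp only [← Finset.sum_add_distrib]
      refine Finset.sum_congr rfl fun x _ => Finset.sum_congr rfl fun z _ => ?_
      have hsym : I y z x = I y x z := by
        simp only [I]
        have : ({z, y, x} : Finset ℕ) = {x, y, z} := by ext; simp; tauto
        rw [this]
      rcases lt_trichotomy x z with h | h | h
      · simp [h, h.not_gt, h.ne]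
      · simp [h]
      · simp [h, h.not_gt, h.ne', hsym]
    rw [h4]
    simp only [I]
    linarith
  have hsum := Finset.sum_le_sum hy
  rw [← hdiff, Finset.sum_const, card_range, nsmul_eq_mul] at hsum
  rw [hV, card_range]
  nlinarith

/-- Random colourings according to a weighting `p` give arbitrarily large graphs that satisfy
`P` and are `(lamEE P p, η, ee)`-dense. -/
lemma lower_bound {P : Palette} {p : ℕ → ℝ} (hp : IsWeighting P p) {η : ℝ} (hη : 0 < η) (N : ℕ) :
    ∃ H : ThreeGraph, N ≤ #H.verts ∧ Satisfies H P ∧ IsDenseEE H (lamEE P p) η := by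
  set K : ℝ := (#(palColours P) : ℝ) with hK
  have hK0 : 0 ≤ K := by positivity
  set ε : ℝ := η / (16 * (K ^ 3 + 1)) with hε
  have hε0 : 0 < ε := by positivity
  obtain ⟨n, hn⟩ := exists_nat_ge (max (N : ℝ) (max (2 * K / ε ^ 4) (2 / η)))
  have hn1 : N ≤ n := by exact_mod_cast (le_max_left _ _).trans hn
  have hn2 : 2 * K ≤ ε ^ 4 * n := by
    have := ((le_max_left _ _).trans (le_max_right _ _)).trans hn
    rwa [div_le_iff₀' (by positivity)] at this
  have hn3 : 2 ≤ η * n := by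
    have := ((le_max_right _ _).trans (le_max_right _ _)).trans hn
    rwa [div_le_iff₀' (by positivity)] at this
  obtain ⟨f, hf, hq⟩ := exists_quasirandom (palColours P) p hp.1 hp.2 n
  refine ⟨patternGraph P n f, by simpa [patternGraph] using hn1,
    patternGraph_satisfies fun x z hx hz => (hf x z hx hz).1, ?_⟩
  refine patternGraph_dense hp hf (e := ε * (n : ℝ) ^ 2) (by positivity)
    (fun c hc A B hA hB => discrepancy (hq c hc) hε0 hn2 hA hB) ?_
  have h1 : 8 * K ^ 3 * ε ≤ η / 2 := by
    rw [hε, mul_div_assoc', div_le_div_iff₀ (by positivity) (by norm_num)]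
    nlinarith [pow_nonneg hK0 3]
  have h2 : (n : ℝ) ^ 2 * 2 ≤ n ^ 2 * (η * n) := mul_le_mul_of_nonneg_left hn3 (by positivity)
  have h3 : 8 * K ^ 3 * ε * n ^ 3 ≤ η / 2 * (n : ℝ) ^ 3 :=
    mul_le_mul_of_nonneg_right h1 (by positivity)
  nlinarith

/-! ### Ramsey's theorem for pairs -/

/-- The first half of Ramsey's theorem for pairs: on `W` the colour of a pair depends only on its
smaller element. -/
lemma ramsey_aux {κ : Type*} [DecidableEq κ] (K : Finset κ) (hK : K.Nonempty) (t : ℕ) :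
    ∃ N, ∀ f : ℕ → ℕ → κ, (∀ i j, f i j ∈ K) → ∀ T : Finset ℕ, N ≤ #T →
      ∃ W ⊆ T, #W = t ∧ ∃ h : ℕ → κ, (∀ i, h i ∈ K) ∧ ∀ i ∈ W, ∀ j ∈ W, i < j → f i j = h i := by
  induction t with
  | zero =>
    obtain ⟨c, hc⟩ := hK
    exact ⟨0, fun f _ T _ => ⟨∅, by simp, by simp, fun _ => c, fun _ => hc, by simp⟩⟩
  | succ t ih =>
    obtain ⟨N, hN⟩ := ih
    refine ⟨#K * N + 2, fun f hf T hT => ?_⟩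
    have hTne : T.Nonempty := card_pos.1 (by omega)
    set m := T.min' hTne with hm
    have hmT : m ∈ T := T.min'_mem hTne
    obtain ⟨c, hc, hcN⟩ := Finset.exists_lt_card_fiber_of_mul_lt_card_of_maps_to
      (s := T.erase m) (t := K) (f := f m) (n := N) (fun j _ => hf m j)
      (by rw [card_erase_of_mem hmT]; omega)
    obtain ⟨W, hW, hWt, h, hhK, hh⟩ := hN f hf _ hcN.le
    have hWm : ∀ j ∈ W, m < j ∧ j ∈ T ∧ f m j = c := fun j hj => by
      have := hW hj
      rw [mem_filter, mem_erase] at this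
      exact ⟨lt_of_le_of_ne (T.min'_le j this.1.2) (Ne.symm this.1.1), this.1.2, this.2⟩
    have hmW : m ∉ W := fun hmW => lt_irrefl _ (hWm m hmW).1
    refine ⟨insert m W, ?_, by rw [card_insert_of_notMem hmW, hWt],
      fun i => if i = m then c else h i, ?_, ?_⟩
    · intro j hj
      rcases mem_insert.1 hj with rfl | hj
      · exact hmT
      · exact (hWm j hj).2.1
    · intro i
      dsimp only
      split_ifs
      exacts [hc, hhK i]
    · intro i hi j hj hij
      rcases mem_insert.1 hi with rfl | hi <;> rcases mem_insert.1 hj with rfl | hj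
      · exact absurd hij (lt_irrefl _)
      · simp [(hWm j hj).2.2]
      · exact absurd hij (hWm i hi).1.not_gt
      · have : i ≠ m := (hWm i hi).1.ne'
        simp only [this, if_false]
        exact hh i hi j hj hij

/-- Ramsey's theorem for pairs, with finitely many colours and target size `5`. -/
lemma ramsey_five {κ : Type*} [DecidableEq κ] (K : Finset κ) (hK : K.Nonempty) :
    ∃ N, ∀ f : ℕ → ℕ → κ, (∀ i j, f i j ∈ K) →
      ∃ W ⊆ range N, #W = 5 ∧ ∃ c, ∀ i ∈ W, ∀ j ∈ W, i < j → f i j = c := by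
  obtain ⟨N, hN⟩ := ramsey_aux K hK (#K * 4 + 1)
  refine ⟨N, fun f hf => ?_⟩
  obtain ⟨W, hW, hWt, h, hhK, hh⟩ := hN f hf (range N) (by simp)
  obtain ⟨c, -, hc⟩ := Finset.exists_lt_card_fiber_of_mul_lt_card_of_maps_to
    (s := W) (t := K) (f := h) (n := 4) (fun j _ => hhK j) (by omega)
  obtain ⟨W', hW', hW5⟩ := Finset.exists_subset_card_eq (Nat.succ_le_of_lt hc)
  refine ⟨W', fun i hi => hW (mem_filter.1 (hW' hi)).1, hW5, c, fun i hi j hj hij => ?_⟩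
  have h1 := mem_filter.1 (hW' hi)
  rw [hh i h1.1 j (mem_filter.1 (hW' hj)).1 hij, h1.2]

/-! ### Large sets and abundant colours -/

/-- Number of pairs in `A × B` of colour `c`. -/
def cnt (ψ : Finset ℕ → ℕ) (c : ℕ) (A B : Finset ℕ) : ℕ :=
  #((A ×ˢ B).filter fun p => ψ {p.1, p.2} = c)

lemma cnt_comm (ψ : Finset ℕ → ℕ) (c : ℕ) (A B : Finset ℕ) : cnt ψ c A B = cnt ψ c B A := by
  refine Finset.card_bij' (fun p _ => p.swap) (fun p _ => p.swap) ?_ ?_ ?_ ?_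
  · rintro ⟨x, y⟩ h
    simp only [mem_filter, mem_product, Prod.swap] at h ⊢
    exact ⟨⟨h.1.2, h.1.1⟩, by rw [pair_comm]; exact h.2⟩
  · rintro ⟨x, y⟩ h
    simp only [mem_filter, mem_product, Prod.swap] at h ⊢
    exact ⟨⟨h.1.2, h.1.1⟩, by rw [pair_comm]; exact h.2⟩
  · intros; rfl
  · intros; rfl

lemma cnt_mono {ψ : Finset ℕ → ℕ} {c : ℕ} {A B A' B' : Finset ℕ} (hA : A ⊆ A') (hB : B ⊆ B') :
    cnt ψ c A B ≤ cnt ψ c A' B' :=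
  card_le_card (filter_subset_filter _ (product_subset_product hA hB))

lemma cnt_eq_sum (ψ : Finset ℕ → ℕ) (c : ℕ) (A B : Finset ℕ) :
    cnt ψ c A B = ∑ y ∈ B, #(A.filter fun x => ψ {x, y} = c) := by
  simp only [cnt, card_filter]
  rw [sum_product_right]

open Filter in
/-- A fixed nonprincipal ultrafilter on the index set of the sequence of 3-graphs. -/
noncomputable abbrev 𝒰 : Filter ℕ := (hyperfilter ℕ : Filter ℕ)

lemma U_le_atTop : 𝒰 ≤ Filter.atTop := by
  rw [← Nat.cofinite_eq_atTop]; exact Filter.hyperfilter_le_cofinite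

/-- A sequence of vertex sets is large if it has positive relative size along `𝒰`. -/
def Large (n : ℕ → ℕ) (A : ℕ → Finset ℕ) : Prop :=
  ∃ δ : ℝ, 0 < δ ∧ ∀ᶠ k in 𝒰, δ * n k ≤ #(A k)

/-- Colour `c` has positive density, relative to all pairs of vertices, between `A` and `B`
along `𝒰`. -/
def Abundant (n : ℕ → ℕ) (φ : ℕ → Finset ℕ → ℕ) (c : ℕ) (A B : ℕ → Finset ℕ) : Prop :=
  ∃ δ : ℝ, 0 < δ ∧ ∀ᶠ k in 𝒰, δ * (n k : ℝ) ^ 2 ≤ cnt (φ k) c (A k) (B k)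

/-- Colour `c` stays abundant between all large subsequences of subsets of `A` and `B`. -/
def Robust (n : ℕ → ℕ) (φ : ℕ → Finset ℕ → ℕ) (c : ℕ) (A B : ℕ → Finset ℕ) : Prop :=
  ∀ A' B' : ℕ → Finset ℕ, (∀ k, A' k ⊆ A k) → (∀ k, B' k ⊆ B k) → Large n A' → Large n B' →
    Abundant n φ c A' B'

lemma Abundant.symm {n φ c A B} (h : Abundant n φ c A B) : Abundant n φ c B A := by
  obtain ⟨δ, hδ, h⟩ := h
  exact ⟨δ, hδ, h.mono fun k hk => by rwa [cnt_comm]⟩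

lemma Robust.symm {n φ c A B} (h : Robust n φ c A B) : Robust n φ c B A :=
  fun _ _ hA hB lA lB => (h _ _ hB hA lB lA).symm

lemma Robust.mono {n φ c A B A' B'} (h : Robust n φ c A B) (hA : ∀ k, A' k ⊆ A k)
    (hB : ∀ k, B' k ⊆ B k) : Robust n φ c A' B' :=
  fun _ _ hA' hB' => h _ _ (fun k => (hA' k).trans (hA k)) (fun k => (hB' k).trans (hB k))

lemma Abundant.mono {n φ c A B A' B'} (h : Abundant n φ c A' B') (hA : ∀ k, A' k ⊆ A k)
    (hB : ∀ k, B' k ⊆ B k) : Abundant n φ c A B := by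
  obtain ⟨δ, hδ, h⟩ := h
  exact ⟨δ, hδ, h.mono fun k hk => hk.trans (by exact_mod_cast cnt_mono (hA k) (hB k))⟩

/-- An abundant colour gives many vertices of `Y` with large monochromatic neighbourhoods
in `A`. -/
lemma Abundant.fibre {n φ c} {A Y : ℕ → Finset ℕ} (h : Abundant n φ c A Y)
    (hn : ∀ k, 0 < n k) (hA : ∀ k, #(A k) ≤ n k) (hY : ∀ k, #(Y k) ≤ n k) :
    ∃ δ : ℝ, 0 < δ ∧ ∀ᶠ k in 𝒰, δ * n k ≤
      #((Y k).filter fun y => δ * n k ≤ #((A k).filter fun x => φ k {x, y} = c)) := by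
  obtain ⟨δ, hδ, h⟩ := h
  refine ⟨δ / 2, by positivity, h.mono fun k hk => ?_⟩
  have hn' : (0 : ℝ) < n k := by exact_mod_cast hn k
  rw [cnt_eq_sum] at hk
  push_cast at hk
  set Y' := (Y k).filter fun y => δ / 2 * n k ≤ #((A k).filter fun x => φ k {x, y} = c) with hY'
  have h1 : ∑ y ∈ Y k, (#((A k).filter fun x => φ k {x, y} = c) : ℝ) ≤
      ∑ y ∈ Y k, (δ / 2 * n k + if δ / 2 * n k ≤ #((A k).filter fun x => φ k {x, y} = c)
        then (n k : ℝ) else 0) := by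
    refine Finset.sum_le_sum fun y _ => ?_
    have : (#((A k).filter fun x => φ k {x, y} = c) : ℝ) ≤ n k := by
      exact_mod_cast (card_le_card (filter_subset _ _)).trans (hA k)
    split_ifs with hy
    · have : 0 < δ / 2 * n k := by positivity
      linarith
    · linarith
  rw [Finset.sum_add_distrib, ← Finset.sum_filter, ← hY', Finset.sum_const, Finset.sum_const,
    nsmul_eq_mul, nsmul_eq_mul] at h1
  have h2 : (#(Y k) : ℝ) * (δ / 2 * n k) ≤ n k * (δ / 2 * n k) :=
    mul_le_mul_of_nonneg_right (by exact_mod_cast hY k) (by positivity)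
  have h3 : δ / 2 * n k * n k ≤ #Y' * n k := by nlinarith
  exact le_of_mul_le_mul_right h3 hn'

/-- In an `ee`-dense graph few vertices `y` have a link that is sparse on some product set. -/
lemma card_bad_le {H : ThreeGraph} {d θ : ℝ} (hθ : 0 < θ) (hd : IsDenseEE H d (θ ^ 2))
    (hn : 0 < #H.verts) {A Y B : Finset ℕ} (hA : A ⊆ H.verts) (hY : Y ⊆ H.verts)
    (hB : B ⊆ H.verts) (hAY : Disjoint A Y) (hBY : Disjoint B Y) (hAB : Disjoint A B)
    {Z : Finset ℕ} (hZ : Z ⊆ Y)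
    (hbad : ∀ y ∈ Z, ∃ A' ⊆ A, ∃ B' ⊆ B,
      (#((A' ×ˢ B').filter fun p => ({p.1, y, p.2} : Finset ℕ) ∈ H.edges) : ℝ) <
        d * #A' * #B' - θ * (#H.verts : ℝ) ^ 2) :
    (#Z : ℝ) ≤ θ * #H.verts := by
  classical
  choose! A' hA' B' hB' hlt using hbad
  -- by disjointness of `A`, `Y`, `B`, the triples of `KEE H Q R` are centred in `Z`
  set Q : Finset (Finset ℕ) := Z.biUnion fun y => (A' y).image fun x => {x, y} with hQ
  set R : Finset (Finset ℕ) := Z.biUnion fun y => (B' y).image fun z => {y, z} with hR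
  have hne : ∀ {D : Finset ℕ}, Disjoint D Y → ∀ {x y}, x ∈ D → y ∈ Y → x ≠ y :=
    fun hD x y hx hy h => Finset.disjoint_left.1 hD hx (h ▸ hy)
  have hQ2 : ∀ q ∈ Q, q ⊆ H.verts ∧ #q = 2 := by
    intro q hq
    simp only [hQ, mem_biUnion, mem_image] at hq
    obtain ⟨y, hy, x, hx, rfl⟩ := hq
    refine ⟨?_, card_pair (hne hAY (hA' y hy hx) (hZ hy))⟩
    rw [insert_subset_iff, singleton_subset_iff]
    exact ⟨hA (hA' y hy hx), hY (hZ hy)⟩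
  have hR2 : ∀ q ∈ R, q ⊆ H.verts ∧ #q = 2 := by
    intro q hq
    simp only [hR, mem_biUnion, mem_image] at hq
    obtain ⟨y, hy, x, hx, rfl⟩ := hq
    refine ⟨?_, card_pair (hne hBY (hB' y hy hx) (hZ hy)).symm⟩
    rw [insert_subset_iff, singleton_subset_iff]
    exact ⟨hY (hZ hy), hB (hB' y hy hx)⟩
  have hpair : ∀ a b c d : ℕ, ({a, b} : Finset ℕ) = {c, d} →
      (a = c ∧ b = d) ∨ (a = d ∧ b = c) := by
    intro a b c d h
    rw [Finset.ext_iff] at h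
    simp only [mem_insert, mem_singleton] at h
    have h1 := (h a).1 (by simp)
    have h2 := (h b).1 (by simp)
    have h3 := (h c).2 (by simp)
    have h4 := (h d).2 (by simp)
    omega
  have hmem : ∀ x y z, (({x, y} : Finset ℕ) ∈ Q ∧ ({y, z} : Finset ℕ) ∈ R) ↔
      y ∈ Z ∧ x ∈ A' y ∧ z ∈ B' y := by
    intro x y z
    simp only [hQ, hR, mem_biUnion, mem_image]
    constructor
    · rintro ⟨⟨y₁, hy₁, x₁, hx₁, h1⟩, ⟨y₂, hy₂, z₂, hz₂, h2⟩⟩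
      have hA1 := hA' _ hy₁ hx₁
      have hB2 := hB' _ hy₂ hz₂
      rcases hpair _ _ _ _ h1 with ⟨rfl, rfl⟩ | ⟨rfl, rfl⟩
      · rcases hpair _ _ _ _ h2 with ⟨rfl, rfl⟩ | ⟨rfl, rfl⟩
        · exact ⟨hy₁, hx₁, hz₂⟩
        · exact absurd (hZ hy₁) (Finset.disjoint_left.1 hBY hB2)
      · rcases hpair _ _ _ _ h2 with ⟨rfl, rfl⟩ | ⟨rfl, rfl⟩
        · exact absurd (hZ hy₂) (Finset.disjoint_left.1 hAY hA1)
        · exact absurd hB2 (Finset.disjoint_left.1 hAB hA1)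
    · rintro ⟨hy, hx, hz⟩
      exact ⟨⟨y, hy, x, hx, rfl⟩, ⟨y, hy, z, hz, rfl⟩⟩
  have hKsum : ∀ g : ℕ × ℕ × ℕ → ℝ, ∑ t ∈ KEE H Q R, g t =
      ∑ y ∈ Z, ∑ p ∈ A' y ×ˢ B' y, g (p.1, y, p.2) := by
    intro g
    rw [Finset.sum_sigma' Z (fun y => A' y ×ˢ B' y)]
    refine Finset.sum_bij' (fun t _ => ⟨t.2.1, (t.1, t.2.2)⟩)
      (fun s _ => (s.2.1, s.1, s.2.2)) ?_ ?_ ?_ ?_ ?_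
    · rintro ⟨x, y, z⟩ ht
      have := (hmem x y z).1 (mem_filter.1 ht).2
      simp only [mem_sigma, mem_product]
      exact this
    · rintro ⟨y, x, z⟩ ht
      simp only [mem_sigma, mem_product] at ht
      simp only [KEE, mem_filter, mem_product]
      exact ⟨⟨hA (hA' y ht.1 ht.2.1), hY (hZ ht.1), hB (hB' y ht.1 ht.2.2)⟩, (hmem x y z).2 ht⟩
    · intros; rfl
    · intros; rfl
    · intros; rfl
  have hdense := hd Q R hQ2 hR2
  have hcard : (#(KEE H Q R) : ℝ) = ∑ y ∈ Z, (#(A' y) : ℝ) * #(B' y) := by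
    have := hKsum fun _ => 1
    simpa using this
  have he : (eEE H Q R : ℝ) = ∑ y ∈ Z,
      (#((A' y ×ˢ B' y).filter fun p => ({p.1, y, p.2} : Finset ℕ) ∈ H.edges) : ℝ) := by
    have := hKsum fun p => if ({p.1, p.2.1, p.2.2} : Finset ℕ) ∈ H.edges then 1 else 0
    simpa [eEE] using this
  have hsum := Finset.sum_le_sum fun y hy => (hlt y hy).le
  rw [← he, Finset.sum_sub_distrib, Finset.sum_const, nsmul_eq_mul] at hsum
  simp only [mul_assoc] at hsum
  rw [← Finset.mul_sum, ← hcard] at hsum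
  have hn' : (0 : ℝ) < #H.verts := by exact_mod_cast hn
  have h1 : (#Z : ℝ) * (θ * (#H.verts : ℝ) ^ 2) ≤ θ * #H.verts * (θ * (#H.verts : ℝ) ^ 2) := by
    nlinarith
  exact le_of_mul_le_mul_right h1 (by positivity)

/-! ### Restriction to links and limiting colour densities -/

open Filter Topology in
/-- One restriction step: sets `A`, `B` that see colours `a`, `b` robustly towards `Y` can be
shrunk to neighbourhoods of a common vertex `y` of `Y` whose link is dense on all products. -/
lemma link_step {H : ℕ → ThreeGraph} {φ : ℕ → Finset ℕ → ℕ} {d : ℝ} {θ : ℕ → ℝ}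
    (hθ : ∀ k, 0 < θ k) (hθ0 : Tendsto θ 𝒰 (𝓝 0)) (hd : ∀ k, IsDenseEE (H k) d (θ k ^ 2))
    (hn : ∀ k, 0 < #(H k).verts) {A Y B : ℕ → Finset ℕ} (hA : ∀ k, A k ⊆ (H k).verts)
    (hY : ∀ k, Y k ⊆ (H k).verts) (hB : ∀ k, B k ⊆ (H k).verts)
    (hAY : ∀ k, Disjoint (A k) (Y k)) (hBY : ∀ k, Disjoint (B k) (Y k))
    (hAB : ∀ k, Disjoint (A k) (B k)) {a b : ℕ}
    (LA : Large (fun k => #(H k).verts) A) (LY : Large (fun k => #(H k).verts) Y)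
    (LB : Large (fun k => #(H k).verts) B)
    (Ra : Robust (fun k => #(H k).verts) φ a A Y) (Rb : Robust (fun k => #(H k).verts) φ b B Y) :
    ∃ (A' B' : ℕ → Finset ℕ) (y : ℕ → ℕ), (∀ k, A' k ⊆ A k) ∧ (∀ k, B' k ⊆ B k) ∧
      Large (fun k => #(H k).verts) A' ∧ Large (fun k => #(H k).verts) B' ∧
      (∀ k, ∀ x ∈ A' k, φ k {x, y k} = a) ∧ (∀ k, ∀ z ∈ B' k, φ k {z, y k} = b) ∧
      ∀ᶠ k in 𝒰, y k ∈ Y k ∧ ∀ A₁ ⊆ A' k, ∀ B₁ ⊆ B' k,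
        d * #A₁ * #B₁ - θ k * (#(H k).verts : ℝ) ^ 2 ≤
          #((A₁ ×ˢ B₁).filter fun p => ({p.1, y k, p.2} : Finset ℕ) ∈ (H k).edges) := by
  classical
  set n : ℕ → ℕ := fun k => #(H k).verts with hndef
  have hcA : ∀ k, #(A k) ≤ n k := fun k => card_le_card (hA k)
  have hcY : ∀ k, #(Y k) ≤ n k := fun k => card_le_card (hY k)
  have hcB : ∀ k, #(B k) ≤ n k := fun k => card_le_card (hB k)
  obtain ⟨δ, hδ, h1⟩ := (Ra A Y (fun _ => Subset.rfl) (fun _ => Subset.rfl) LA LY).fibre hn hcA hcY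
  set Y₁ : ℕ → Finset ℕ := fun k =>
    (Y k).filter fun y => δ * n k ≤ #((A k).filter fun x => φ k {x, y} = a) with hY₁
  set Bad : ℕ → Finset ℕ := fun k => (Y k).filter fun y => ∃ A' ⊆ A k, ∃ B' ⊆ B k,
      (#((A' ×ˢ B').filter fun p => ({p.1, y, p.2} : Finset ℕ) ∈ (H k).edges) : ℝ) <
        d * #A' * #B' - θ k * (n k : ℝ) ^ 2 with hBad
  have hBadc : ∀ k, (#(Bad k) : ℝ) ≤ θ k * n k := fun k =>
    card_bad_le (hθ k) (hd k) (hn k) (hA k) (hY k) (hB k) (hAY k) (hBY k) (hAB k)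
      (filter_subset _ _) (fun y hy => (mem_filter.1 hy).2)
  set Y₂ : ℕ → Finset ℕ := fun k => Y₁ k \ Bad k with hY₂
  have hY₂Y : ∀ k, Y₂ k ⊆ Y k := fun k => sdiff_subset.trans (filter_subset _ _)
  have LY₂ : Large n Y₂ := by
    refine ⟨δ / 2, by positivity, ?_⟩
    filter_upwards [h1, hθ0.eventually (gt_mem_nhds (show (0 : ℝ) < δ / 2 by positivity))]
      with k hk hk'
    have h3 : (#(Y₁ k) : ℝ) ≤ #(Y₂ k) + #(Bad k) := by
      exact_mod_cast Finset.card_le_card_sdiff_add_card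
    have h4 : θ k * n k ≤ δ / 2 * n k := mul_le_mul_of_nonneg_right hk'.le (by positivity)
    have h5 := hBadc k
    have h6 : δ * n k ≤ #(Y₁ k) := hk
    linarith
  obtain ⟨δ', hδ', h2⟩ := (Rb B Y₂ (fun _ => Subset.rfl) hY₂Y LB LY₂).fibre hn hcB
    (fun k => (card_le_card (hY₂Y k)).trans (hcY k))
  let good : ℕ → ℕ → Prop := fun k y =>
    y ∈ (Y₂ k).filter fun y => δ' * n k ≤ #((B k).filter fun x => φ k {x, y} = b)
  have hex : ∀ k, ∃ y, (∃ y', good k y') → good k y := by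
    intro k
    by_cases h : ∃ y', good k y'
    · exact ⟨h.choose, fun _ => h.choose_spec⟩
    · exact ⟨0, fun h' => absurd h' h⟩
  choose y hy using hex
  have hgood : ∀ᶠ k in 𝒰, good k (y k) := by
    filter_upwards [h2] with k hk
    apply hy
    have : 0 < δ' * n k := mul_pos hδ' (by exact_mod_cast hn k)
    have : (0 : ℝ) < #((Y₂ k).filter fun y => δ' * n k ≤
      #((B k).filter fun x => φ k {x, y} = b)) := this.trans_le hk
    exact card_pos.1 (by exact_mod_cast this)
  refine ⟨fun k => (A k).filter fun x => φ k {x, y k} = a,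
    fun k => (B k).filter fun x => φ k {x, y k} = b, y, fun k => filter_subset _ _,
    fun k => filter_subset _ _, ⟨δ, hδ, ?_⟩, ⟨δ', hδ', ?_⟩, fun k x hx => (mem_filter.1 hx).2,
    fun k x hx => (mem_filter.1 hx).2, ?_⟩
  · filter_upwards [hgood] with k hk
    have h : y k ∈ Y₁ k := (mem_sdiff.1 (mem_filter.1 hk).1).1
    rw [hY₁] at h
    exact (mem_filter.1 h).2
  · filter_upwards [hgood] with k hk
    exact (mem_filter.1 hk).2
  · filter_upwards [hgood] with k hk
    have hk₂ := mem_sdiff.1 (mem_filter.1 hk).1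
    have hyY := (mem_filter.1 hk₂.1).1
    refine ⟨hyY, fun A₁ hA₁ B₁ hB₁ => ?_⟩
    by_contra! hlt
    exact hk₂.2 (mem_filter.2 ⟨hyY, A₁, hA₁.trans (filter_subset _ _), B₁,
      hB₁.trans (filter_subset _ _), hlt⟩)

/-- On all product subsets of `A × B`, the colours in `C` together have relative density at
least `d`, up to an additive error `θ n²`. -/
def LinkDense (n : ℕ → ℕ) (φ : ℕ → Finset ℕ → ℕ) (d : ℝ) (θ : ℕ → ℝ) (C : Finset ℕ)
    (A B : ℕ → Finset ℕ) : Prop :=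
  ∀ᶠ k in 𝒰, ∀ A₁ ⊆ A k, ∀ B₁ ⊆ B k, d * #A₁ * #B₁ - θ k * (n k : ℝ) ^ 2 ≤
    #((A₁ ×ˢ B₁).filter fun p => φ k {p.1, p.2} ∈ C)

lemma LinkDense.mono {n φ d θ C A B A' B'} (h : LinkDense n φ d θ C A B)
    (hA : ∀ k, A' k ⊆ A k) (hB : ∀ k, B' k ⊆ B k) : LinkDense n φ d θ C A' B' :=
  Filter.Eventually.mono h fun k hk A₁ hA₁ B₁ hB₁ => hk A₁ (hA₁.trans (hA k)) B₁ (hB₁.trans (hB k))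

lemma sum_cnt (ψ : Finset ℕ → ℕ) (C A B : Finset ℕ) :
    ∑ c ∈ C, cnt ψ c A B = #((A ×ˢ B).filter fun p => ψ {p.1, p.2} ∈ C) := by
  have h := Finset.card_eq_sum_card_fiberwise (f := fun p : ℕ × ℕ => ψ {p.1, p.2}) (t := C)
    (s := (A ×ˢ B).filter fun p => ψ {p.1, p.2} ∈ C)
    (fun p hp => (mem_filter.1 (mem_coe.1 hp)).2)
  rw [h]
  refine Finset.sum_congr rfl fun c hc => ?_
  rw [cnt, filter_filter]
  congr 1
  refine filter_congr fun p _ => ⟨fun h => ⟨h ▸ hc, h⟩, fun h => h.2⟩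

open Filter Topology in
lemma exists_ultralimit {r : ℕ → ℝ} (hr : ∀ k, r k ∈ Set.Icc (0 : ℝ) 1) :
    ∃ x ∈ Set.Icc (0 : ℝ) 1, Tendsto r 𝒰 (𝓝 x) :=
  isCompact_Icc.ultrafilter_le_nhds ((hyperfilter ℕ).map r)
    (le_principal_iff.2 (mem_map.2 (univ_mem' hr)))

open Filter Topology in
/-- Limiting densities of colours between `A` and `B` form a weighting, supported on colours
abundant between `A` and `B`, for which every link-density condition becomes a lower bound
on a sum of weights. -/
lemma exists_limit_weighting {P : Palette} {n : ℕ → ℕ} {φ : ℕ → Finset ℕ → ℕ} {d : ℝ}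
    {θ : ℕ → ℝ} (hθ : ∀ k, 0 < θ k) (hθ0 : Tendsto θ 𝒰 (𝓝 0)) (hn : ∀ k, 0 < n k)
    {A B : ℕ → Finset ℕ} (LA : Large n A) (LB : Large n B)
    (hcol : ∀ k, ∀ x ∈ A k, ∀ y ∈ B k, φ k {x, y} ∈ palColours P) :
    ∃ x : ℕ → ℝ, IsWeighting P x ∧ (∀ c, 0 < x c → Abundant n φ c A B) ∧
      ∀ C, LinkDense n φ d θ C A B → d ≤ ∑ c ∈ C, x c := by
  obtain ⟨δ, hδ, LA⟩ := LA
  obtain ⟨δ', hδ', LB⟩ := LB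
  let r : ℕ → ℕ → ℝ := fun c k => cnt (φ k) c (A k) (B k) / (#(A k) * #(B k))
  have hr : ∀ c k, r c k ∈ Set.Icc (0 : ℝ) 1 := by
    intro c k
    refine ⟨by positivity, div_le_one_of_le₀ ?_ (by positivity)⟩
    rw [← Nat.cast_mul, ← card_product]
    exact_mod_cast card_le_card (filter_subset _ _)
  choose x hx hlim using fun c => exists_ultralimit (hr c)
  have hnpos : ∀ k, (0 : ℝ) < n k := fun k => by exact_mod_cast hn k
  have hbig : ∀ᶠ k in 𝒰, 0 < (#(A k) : ℝ) * #(B k) ∧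
      δ * δ' * (n k : ℝ) ^ 2 ≤ (#(A k) : ℝ) * #(B k) := by
    filter_upwards [LA, LB] with k hA hB
    have h1 : 0 < δ * n k := mul_pos hδ (hnpos k)
    have h2 : 0 < δ' * n k := mul_pos hδ' (hnpos k)
    refine ⟨mul_pos (h1.trans_le hA) (h2.trans_le hB), ?_⟩
    calc δ * δ' * (n k : ℝ) ^ 2 = (δ * n k) * (δ' * n k) := by ring
      _ ≤ _ := mul_le_mul hA hB h2.le (by positivity)
  have hsum : ∀ C : Finset ℕ, Tendsto (fun k => ∑ c ∈ C, r c k) 𝒰 (𝓝 (∑ c ∈ C, x c)) :=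
    fun C => tendsto_finsetSum C fun c _ => hlim c
  have hsumr : ∀ (C : Finset ℕ) k, ∑ c ∈ C, r c k =
      #((A k ×ˢ B k).filter fun p => φ k {p.1, p.2} ∈ C) / (#(A k) * #(B k)) := by
    intro C k
    rw [← sum_cnt]
    push_cast
    rw [Finset.sum_div]
  refine ⟨x, ⟨fun a _ => (hx a).1, ?_⟩, ?_, ?_⟩
  · refine tendsto_nhds_unique (hsum (palColours P)) (tendsto_const_nhds.congr' ?_)
    filter_upwards [hbig] with k hk
    rw [hsumr, filter_true_of_mem, card_product, Nat.cast_mul, div_self hk.1.ne']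
    intro p hp
    exact hcol k _ (mem_product.1 hp).1 _ (mem_product.1 hp).2
  · intro c hc
    refine ⟨x c / 2 * (δ * δ'), by positivity, ?_⟩
    filter_upwards [hbig, (hlim c).eventually (lt_mem_nhds (half_lt_self hc))] with k hk hk'
    have h1 : x c / 2 * (#(A k) * #(B k)) < cnt (φ k) c (A k) (B k) := (lt_div_iff₀ hk.1).1 hk'
    have h2 := mul_le_mul_of_nonneg_left hk.2 (show 0 ≤ x c / 2 by positivity)
    linarith
  · intro C hC
    have hlow : Tendsto (fun k => d - θ k / (δ * δ')) 𝒰 (𝓝 d) := by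
      simpa using (tendsto_const_nhds (x := d)).sub (hθ0.div_const (δ * δ'))
    refine le_of_tendsto_of_tendsto hlow (hsum C) ?_
    filter_upwards [hbig, hC] with k hk hk'
    have h1 := hk' (A k) Subset.rfl (B k) Subset.rfl
    rw [hsumr, le_div_iff₀ hk.1]
    refine le_trans ?_ h1
    have h2 : θ k * (n k : ℝ) ^ 2 ≤ θ k / (δ * δ') * (#(A k) * #(B k)) := by
      have := mul_le_mul_of_nonneg_left hk.2 (show 0 ≤ θ k / (δ * δ') from
        div_nonneg (hθ k).le (by positivity))
      refine le_trans (le_of_eq ?_) this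
      field_simp
    linarith

open Filter Topology in
/-- Five consecutive large sets whose pairs all share the same set `S` of robust colours yield a
weighting of the palette: the weights are the limiting colour densities between the second and
fourth sets, after restriction to links of vertices in the other three sets. -/
lemma exists_weighting_of_five {P : Palette} {H : ℕ → ThreeGraph} {φ : ℕ → Finset ℕ → ℕ}
    {ord : ℕ → ℕ → ℕ} {d : ℝ} {θ : ℕ → ℝ}
    (hθ : ∀ k, 0 < θ k) (hθ0 : Tendsto θ 𝒰 (𝓝 0)) (hd : ∀ k, IsDenseEE (H k) d (θ k ^ 2))
    (hn : ∀ k, 0 < #(H k).verts)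
    (hcol : ∀ k, ∀ u ∈ (H k).verts, ∀ v ∈ (H k).verts, u ≠ v → φ k {u, v} ∈ palColours P)
    (hpat : ∀ k u v w, ({u, v, w} : Finset ℕ) ∈ (H k).edges → ord k u < ord k v →
      ord k v < ord k w → (φ k {u, v}, φ k {v, w}, φ k {u, w}) ∈ P)
    {V : Fin 5 → ℕ → Finset ℕ} (hV : ∀ i k, V i k ⊆ (H k).verts)
    (hord : ∀ i j, i < j → ∀ k, ∀ x ∈ V i k, ∀ y ∈ V j k, ord k x < ord k y)
    {S : Finset ℕ} (hL : ∀ i, Large (fun k => #(H k).verts) (V i))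
    (hR : ∀ i j, i < j → ∀ c ∈ S, Robust (fun k => #(H k).verts) φ c (V i) (V j))
    (hS : ∀ c ∈ palColours P, Abundant (fun k => #(H k).verts) φ c (V 1) (V 3) → c ∈ S) :
    ∃ x, IsWeighting P x ∧ d ≤ lamEE P x := by
  set n : ℕ → ℕ := fun k => #(H k).verts with hndef
  have hdisj : ∀ i j, i ≠ j → ∀ k, Disjoint (V i k) (V j k) := by
    intro i j hij k
    rw [Finset.disjoint_left]
    intro x hx hx'
    rcases lt_or_gt_of_ne hij with h | h
    · exact lt_irrefl _ (hord i j h k x hx x hx')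
    · exact lt_irrefl _ (hord j i h k x hx' x hx)
  have hRob : ∀ i j, i ≠ j → ∀ c ∈ S, Robust n φ c (V i) (V j) := by
    intro i j hij c hc
    rcases lt_or_gt_of_ne hij with h | h
    · exact hR i j h c hc
    · exact (hR j i h c hc).symm
  -- one restriction to the link of a vertex of `V j`, where `j` is neither `1` nor `3`
  have gen : ∀ j, j ≠ 1 → j ≠ 3 → ∀ a ∈ S, ∀ b ∈ S, ∀ C : Finset ℕ,
      (∀ k, ∀ x ∈ V 1 k, ∀ y ∈ V j k, ∀ z ∈ V 3 k, ({x, y, z} : Finset ℕ) ∈ (H k).edges →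
        φ k {x, y} = a → φ k {z, y} = b → φ k {x, z} ∈ C) →
      ∀ A B : ℕ → Finset ℕ, (∀ k, A k ⊆ V 1 k) → (∀ k, B k ⊆ V 3 k) → Large n A → Large n B →
      ∃ A' B' : ℕ → Finset ℕ, (∀ k, A' k ⊆ A k) ∧ (∀ k, B' k ⊆ B k) ∧ Large n A' ∧ Large n B' ∧
        LinkDense n φ d θ C A' B' := by
    intro j hj1 hj3 a ha b hb C hC A B hA hB LA LB
    obtain ⟨A', B', y, hA', hB', LA', LB', hya, hyb, hy⟩ := link_step hθ hθ0 hd hn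
      (fun k => (hA k).trans (hV 1 k)) (hV j) (fun k => (hB k).trans (hV 3 k))
      (fun k => (hdisj 1 j hj1.symm k).mono_left (hA k))
      (fun k => (hdisj 3 j hj3.symm k).mono_left (hB k))
      (fun k => (hdisj 1 3 (by decide) k).mono (hA k) (hB k)) LA (hL j) LB
      ((hRob 1 j hj1.symm a ha).mono hA fun _ => Subset.rfl)
      ((hRob 3 j hj3.symm b hb).mono hB fun _ => Subset.rfl)
    refine ⟨A', B', hA', hB', LA', LB', hy.mono fun k hk A₁ hA₁ B₁ hB₁ =>
      (hk.2 A₁ hA₁ B₁ hB₁).trans ?_⟩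
    norm_cast
    refine card_le_card fun p hp => ?_
    rw [mem_filter, mem_product] at hp ⊢
    exact ⟨hp.1, hC k _ (hA k (hA' k (hA₁ hp.1.1))) _ hk.1 _ (hB k (hB' k (hB₁ hp.1.2))) hp.2
      (hya k _ (hA₁ hp.1.1)) (hyb k _ (hB₁ hp.1.2))⟩
  -- the position of `y` relative to `x ∈ V 1` and `z ∈ V 3` decides which entry of the pattern
  -- the pair `x z` fills: `y ∈ V 2` gives the third, `y ∈ V 0` the second, `y ∈ V 4` the first
  have ext : ∀ i : Fin 3, ∀ a ∈ S, ∀ b ∈ S,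
      ∀ A B : ℕ → Finset ℕ, (∀ k, A k ⊆ V 1 k) → (∀ k, B k ⊆ V 3 k) → Large n A → Large n B →
      ∃ A' B' : ℕ → Finset ℕ, (∀ k, A' k ⊆ A k) ∧ (∀ k, B' k ⊆ B k) ∧ Large n A' ∧ Large n B' ∧
        LinkDense n φ d θ (completions P i a b) A' B' := by
    intro i a ha b hb
    fin_cases i
    · refine gen 2 (by decide) (by decide) a ha b hb _ fun k x hx y hy z hz he h1 h2 => ?_
      refine mem_completions_zero.2 ?_
      have := hpat k x y z he (hord 1 2 (by decide) k x hx y hy) (hord 2 3 (by decide) k y hy z hz)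
      rwa [h1, pair_comm y z, h2] at this
    · refine gen 0 (by decide) (by decide) a ha b hb _ fun k x hx y hy z hz he h1 h2 => ?_
      refine mem_completions_one.2 ?_
      rw [Finset.insert_comm] at he
      have := hpat k y x z he (hord 0 1 (by decide) k y hy x hx) (hord 1 3 (by decide) k x hx z hz)
      rwa [pair_comm y x, h1, pair_comm y z, h2] at this
    · refine gen 4 (by decide) (by decide) b hb a ha _ fun k x hx y hy z hz he h1 h2 => ?_
      refine mem_completions_two.2 ?_
      rw [pair_comm y z] at he
      have := hpat k x z y he (hord 1 3 (by decide) k x hx z hz) (hord 3 4 (by decide) k z hz y hy)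
      rwa [h1, h2] at this
  have iter : ∀ T : Finset (Fin 3 × ℕ × ℕ), (∀ t ∈ T, t.2.1 ∈ S ∧ t.2.2 ∈ S) →
      ∃ A B : ℕ → Finset ℕ, (∀ k, A k ⊆ V 1 k) ∧ (∀ k, B k ⊆ V 3 k) ∧ Large n A ∧ Large n B ∧
        ∀ t ∈ T, LinkDense n φ d θ (completions P t.1 t.2.1 t.2.2) A B := by
    intro T
    induction T using Finset.induction_on with
    | empty => exact fun _ => ⟨V 1, V 3, fun _ => Subset.rfl, fun _ => Subset.rfl, hL 1, hL 3,
        by simp⟩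
    | insert t T _ ih =>
      intro hT
      obtain ⟨A, B, hA, hB, LA, LB, hAB⟩ := ih fun t ht => hT t (mem_insert_of_mem ht)
      have ht := hT t (mem_insert_self _ _)
      obtain ⟨A', B', hA', hB', LA', LB', h'⟩ := ext t.1 _ ht.1 _ ht.2 A B hA hB LA LB
      refine ⟨A', B', fun k => (hA' k).trans (hA k), fun k => (hB' k).trans (hB k), LA', LB', ?_⟩
      intro s hs
      rcases mem_insert.1 hs with rfl | hs
      · exact h'
      · exact (hAB s hs).mono hA' hB'
  obtain ⟨A, B, hA, hB, LA, LB, hAB⟩ := iter (univ ×ˢ S ×ˢ S) (by simp)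
  obtain ⟨x, hx, hxS, hxd⟩ := exists_limit_weighting (P := P) (φ := φ) (d := d) hθ hθ0 hn LA LB
    (fun k u hu v hv => hcol k u (hV 1 k (hA k hu)) v (hV 3 k (hB k hv)) fun h =>
      Finset.disjoint_left.1 (hdisj 1 3 (by decide) k) (hA k hu) (h ▸ hB k hv))
  refine ⟨x, hx, ?_⟩
  obtain ⟨a₀, ha₀, hxa₀⟩ := exists_pos_weight hx
  refine le_csInf ⟨_, a₀, ha₀, a₀, ha₀, mul_pos hxa₀ hxa₀, rfl⟩ ?_
  rintro l ⟨a, ha, b, hb, hab, rfl⟩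
  have hxa : 0 < x a := lt_of_le_of_ne (hx.1 a ha) fun h => by simp [← h] at hab
  have hxb : 0 < x b := lt_of_le_of_ne (hx.1 b hb) fun h => by simp [← h] at hab
  have haS := hS a ha ((hxS a hxa).mono hA hB)
  have hbS := hS b hb ((hxS b hxb).mono hA hB)
  exact le_lamCodeg_iff.2 fun i =>
    ⟨hxd _ (hAB (i, a, b) (by simp [haS, hbS])), hxd _ (hAB (i, b, a) (by simp [haS, hbS]))⟩

/-! ### Cutting the ordered vertex set and minimising the abundant colours -/

/-- An ordered finite set has `m` consecutive intervals, each containing at least a fraction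
`1 / m` of the elements (rounded down). -/
lemma exists_intervals (V : Finset ℕ) (ord : ℕ → ℕ) (hinj : Set.InjOn ord ↑V) (m : ℕ) :
    ∃ W : ℕ → Finset ℕ, (∀ i, W i ⊆ V) ∧
      (∀ i j, i < j → ∀ x ∈ W i, ∀ y ∈ W j, ord x < ord y) ∧ ∀ i < m, #V / m ≤ #(W i) := by
  set rk : ℕ → ℕ := fun v => #(V.filter fun u => ord u < ord v) with hrk
  have hmono : ∀ x y, ord x ≤ ord y → rk x ≤ rk y := fun x y h =>
    card_le_card (monotone_filter_right _ fun u _ hu => lt_of_lt_of_le hu h)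
  have hstrict : ∀ x ∈ V, ∀ y, ord x < ord y → rk x < rk y := fun x hx y h =>
    card_lt_card ⟨monotone_filter_right _ fun u _ hu => lt_trans hu h, fun h' =>
      lt_irrefl _ (mem_filter.1 (h' (mem_filter.2 ⟨hx, h⟩))).2⟩
  have himage : V.image rk = range #V := by
    refine eq_of_subset_of_card_le ?_ ?_
    · intro r hr
      obtain ⟨v, hv, rfl⟩ := mem_image.1 hr
      exact mem_range.2 (card_lt_card ⟨filter_subset _ _, fun h' =>
        lt_irrefl _ (mem_filter.1 (h' hv)).2⟩)
    · rw [card_range, card_image_of_injOn]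
      intro x hx y hy hxy
      rcases lt_trichotomy (ord x) (ord y) with h | h | h
      · exact absurd hxy (hstrict x hx y h).ne
      · exact hinj hx hy h
      · exact absurd hxy (hstrict y hy x h).ne'
  refine ⟨fun i => V.filter fun v => rk v / (#V / m) = i, fun i => filter_subset _ _, ?_, ?_⟩
  · intro i j hij x hx y hy
    by_contra! h
    have := Nat.div_le_div_right (c := #V / m) (hmono y x h)
    rw [(mem_filter.1 hx).2, (mem_filter.1 hy).2] at this
    omega
  · intro i hi
    set q := #V / m with hq
    have hsub : Ico (i * q) ((i + 1) * q) ⊆ (V.filter fun v => rk v / q = i).image rk := by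
      intro r hr
      rw [mem_Ico] at hr
      have h1 : (i + 1) * q ≤ #V :=
        (Nat.mul_le_mul_right q hi).trans (Nat.mul_div_le _ _)
      have h2 : r ∈ V.image rk := by rw [himage]; exact mem_range.2 (hr.2.trans_le h1)
      obtain ⟨v, hv, rfl⟩ := mem_image.1 h2
      exact mem_image.2 ⟨v, mem_filter.2 ⟨hv, Nat.div_eq_of_lt_le hr.1 hr.2⟩, rfl⟩
    have := (card_le_card hsub).trans card_image_le
    rw [Nat.card_Ico, ← Nat.sub_mul, Nat.add_sub_cancel_left, one_mul] at this
    exact this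

lemma Large.mono {n A A'} (h : Large n A) (hA : ∀ k, A k ⊆ A' k) : Large n A' := by
  obtain ⟨δ, hδ, h⟩ := h
  exact ⟨δ, hδ, h.mono fun k hk => hk.trans (by exact_mod_cast card_le_card (hA k))⟩

/-- Large sets can be shrunk to large sets between which every abundant colour is robust:
shrink so that the number of abundant colours, summed over all pairs, is minimal. -/
lemma exists_robust {n : ℕ → ℕ} {φ : ℕ → Finset ℕ → ℕ} (C : Finset ℕ) (m : ℕ)
    (W : ℕ → ℕ → Finset ℕ) (hW : ∀ i < m, Large n (W i)) :
    ∃ V : ℕ → ℕ → Finset ℕ, (∀ i k, V i k ⊆ W i k) ∧ (∀ i < m, Large n (V i)) ∧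
      ∀ i < m, ∀ j < m, i < j → ∀ c ∈ C, Abundant n φ c (V i) (V j) →
        Robust n φ c (V i) (V j) := by
  classical
  let F : (ℕ → ℕ → Finset ℕ) → Finset (ℕ × ℕ × ℕ) := fun V =>
    (range m ×ˢ range m ×ˢ C).filter fun t => Abundant n φ t.2.2 (V t.1) (V t.2.1)
  obtain ⟨V, ⟨hVW, hVL⟩, hmin⟩ := (measure fun V => #(F V)).wf.has_min
    {V : ℕ → ℕ → Finset ℕ | (∀ i k, V i k ⊆ W i k) ∧ ∀ i < m, Large n (V i)}
    ⟨W, fun _ _ => Subset.rfl, hW⟩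
  refine ⟨V, hVW, hVL, fun i hi j hj hij c hc hab A B hA hB LA LB => ?_⟩
  by_contra hnot
  let V' := Function.update (Function.update V i A) j B
  have hi' : V' i = A := by simp [V', hij.ne]
  have hj' : V' j = B := by simp [V']
  have hsub : ∀ l k, V' l k ⊆ V l k := by
    intro l k
    by_cases hlj : l = j
    · subst hlj; rw [hj']; exact hB k
    by_cases hli : l = i
    · subst hli; rw [hi']; exact hA k
    simp [V', hlj, hli]
  have hL' : ∀ l < m, Large n (V' l) := by
    intro l hl
    by_cases hlj : l = j
    · subst hlj; rwa [hj']
    by_cases hli : l = i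
    · subst hli; rwa [hi']
    simpa [V', hlj, hli] using hVL l hl
  refine hmin V' ⟨fun l k => (hsub l k).trans (hVW l k), hL'⟩ (card_lt_card ⟨?_, ?_⟩)
  · exact monotone_filter_right _ fun t _ ht => Abundant.mono ht (hsub _) (hsub _)
  · intro h
    have h1 := h (show (i, j, c) ∈ F V by simp [F, hi, hj, hc, hab])
    have h2 := (mem_filter.1 h1).2
    dsimp only at h2
    rw [hi', hj'] at h2
    exact hnot h2

/-! ### The two bounds for the family of graphs that do not satisfy the palette -/

open Filter Topology in
/-- A density achieved by arbitrarily large and arbitrarily uniform graphs satisfying `P` is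
at most the value of some weighting of `P`. -/
lemma upper_bound {P : Palette} {d : ℝ}
    (h : ∀ η : ℝ, 0 < η → ∀ n : ℕ, ∃ H : ThreeGraph, n ≤ #H.verts ∧ Satisfies H P ∧
      IsDenseEE H d η) :
    ∃ x, IsWeighting P x ∧ d ≤ lamEE P x := by
  classical
  set θ : ℕ → ℝ := fun k => 1 / ((k : ℝ) + 1) with hθdef
  have hθ : ∀ k, 0 < θ k := fun k => Nat.one_div_pos_of_nat
  have hθ0 : Tendsto θ 𝒰 (𝓝 0) := tendsto_one_div_add_atTop_nhds_zero_nat.mono_left U_le_atTop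
  choose H hHn hHP hHd using fun k => h (θ k ^ 2) (pow_pos (hθ k) 2) (k + 1)
  have hn : ∀ k, 0 < #(H k).verts := fun k => by have := hHn k; omega
  choose ord φ hinj hcol hpat using hHP
  obtain ⟨m, hm⟩ := ramsey_five (palColours P).powerset ⟨∅, by simp⟩
  choose W hWV hWord hWcard using fun k => exists_intervals (H k).verts (ord k) (hinj k) m
  have hWL : ∀ i < m, Large (fun k => #(H k).verts) (fun k => W k i) := by
    intro i hi
    have hm0 : (0 : ℝ) < m := by exact_mod_cast (Nat.zero_le i).trans_lt hi
    refine ⟨1 / (2 * m), by positivity, ?_⟩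
    filter_upwards [U_le_atTop (eventually_ge_atTop m)] with k hk
    have h1 : m ≤ #(H k).verts := by have := hHn k; omega
    have h2 : 1 ≤ #(H k).verts / m := (Nat.one_le_div_iff (by omega)).2 h1
    have h3 : #(H k).verts < m * (#(H k).verts / m + 1) :=
      Nat.lt_mul_div_succ _ (by omega)
    have h4 : #(H k).verts ≤ 2 * m * #(W k i) := by
      have := hWcard k i hi
      nlinarith
    rw [one_div, inv_mul_le_iff₀ (by positivity)]
    exact_mod_cast h4
  obtain ⟨V, hVW, hVL, hrob⟩ := exists_robust (φ := φ) (palColours P) m (fun i k => W k i) hWL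
  obtain ⟨T, hTm, hT5, S, hS⟩ := hm
    (fun i j => (palColours P).filter fun c => Abundant (fun k => #(H k).verts) φ c (V i) (V j))
    (fun i j => mem_powerset.2 (filter_subset _ _))
  set e := T.orderEmbOfFin hT5
  have heT : ∀ i, e i ∈ T := fun i => T.orderEmbOfFin_mem hT5 i
  have hem : ∀ i, e i < m := fun i => mem_range.1 (hTm (heT i))
  have hlt : ∀ i j : Fin 5, i < j → e i < e j := fun i j hij => e.strictMono hij
  refine exists_weighting_of_five hθ hθ0 hHd hn hcol hpat (V := fun i => V (e i)) (S := S)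
    (fun i k => (hVW _ k).trans (hWV k _)) (fun i j hij k x hx y hy =>
      hWord k _ _ (hlt i j hij) x (hVW _ k hx) y (hVW _ k hy)) (fun i => hVL _ (hem i)) ?_ ?_
  · intro i j hij c hc
    rw [← hS _ (heT i) _ (heT j) (hlt i j hij), mem_filter] at hc
    exact hrob _ (hem i) _ (hem j) (hlt i j hij) c hc.1 hc.2
  · intro c hc hab
    rw [← hS _ (heT 1) _ (heT 3) (hlt 1 3 (by decide)), mem_filter]
    exact ⟨hc, hab⟩

lemma satisfies_of_free {P : Palette} {H : ThreeGraph}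
    (h : ∀ F ∈ {F | ¬ Satisfies F P}, ¬ IsSubhypergraph F H) : Satisfies H P := by
  by_contra hH
  exact h H hH ⟨id, Set.injOn_id _, fun v hv => hv, fun e he => by simpa using he⟩

lemma exists_weighting {P : Palette} (hP : P.Nonempty) : ∃ x, IsWeighting P x := by
  obtain ⟨p, hp⟩ := hP
  have : p.1 ∈ palColours P := by
    simp only [palColours, mem_union]
    exact Or.inl (Or.inl (mem_image_of_mem _ hp))
  refine ⟨fun a => if a = p.1 then 1 else 0, fun a _ => by dsimp only; split_ifs <;> norm_num, ?_⟩
  rw [Finset.sum_ite_eq', if_pos this]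

/-- For a nonempty palette `P`, the family of graphs that do not satisfy `P` has density
`LambdaEE P`. -/
lemma piEE_eq {P : Palette} (hP : P.Nonempty) : piEE {F | ¬ Satisfies F P} = LambdaEE P := by
  obtain ⟨x₀, hx₀⟩ := exists_weighting hP
  have key : ∀ x, IsWeighting P x → lamEE P x ∈ {d : ℝ | 0 ≤ d ∧ d ≤ 1 ∧ ∀ η : ℝ, 0 < η →
      ∀ n : ℕ, ∃ H : ThreeGraph, n ≤ H.verts.card ∧
        (∀ F ∈ {F | ¬ Satisfies F P}, ¬ IsSubhypergraph F H) ∧ IsDenseEE H d η} := by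
    intro x hx
    refine ⟨lamEE_nonneg hx, lamEE_le_one hx, fun η hη n => ?_⟩
    obtain ⟨H, hn, hs, hd⟩ := lower_bound hx hη n
    exact ⟨H, hn, fun F hF hFH => hF (Satisfies.mono hFH hs), hd⟩
  refine le_antisymm (csSup_le ⟨_, key x₀ hx₀⟩ ?_) (csSup_le ⟨_, x₀, hx₀, rfl⟩ ?_)
  · rintro d ⟨-, -, hd⟩
    obtain ⟨x, hx, hdx⟩ := upper_bound (P := P) (d := d) fun η hη n => by
      obtain ⟨H, hn, hf, hH⟩ := hd η hη n
      exact ⟨H, hn, satisfies_of_free hf, hH⟩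
    refine hdx.trans (le_csSup ⟨1, ?_⟩ ⟨x, hx, rfl⟩)
    rintro _ ⟨y, hy, rfl⟩
    exact lamEE_le_one hy
  · rintro _ ⟨x, hx, rfl⟩
    exact le_csSup ⟨1, fun d hd => hd.2.1⟩ (key x hx)

/-- The empty palette has no weighting, so its Lagrangian is the supremum `0` of the empty set;
so is the density of the family of all 3-graphs. -/
lemma piEE_univ : piEE Set.univ = LambdaEE ∅ := by
  have h1 : LambdaEE ∅ = sSup ∅ := by
    unfold LambdaEE
    congr 1
    refine Set.eq_empty_of_forall_notMem ?_
    rintro _ ⟨x, ⟨-, hx⟩, -⟩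
    simp [palColours] at hx
  rw [h1]
  unfold piEE
  congr 1
  refine Set.eq_empty_of_forall_notMem ?_
  rintro d ⟨-, -, hd⟩
  obtain ⟨H, -, hf, -⟩ := hd 1 one_pos 0
  exact hf H (Set.mem_univ _) ⟨id, Set.injOn_id _, fun v hv => hv, fun e he => by simpa using he⟩

end PaletteEE

/-- For every palette 𝒫 there is a family 𝓕 with π_{ee}(𝓕) = Λ^{ee}_𝒫. -/
theorem paletteLagrangianEE_mem_PiEE (P : Palette) :
    ∃ 𝓕 : Set ThreeGraph, piEE 𝓕 = LambdaEE P := by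
  rcases P.eq_empty_or_nonempty with rfl | hP
  · exact ⟨_, PaletteEE.piEE_univ⟩
  · exact ⟨_, PaletteEE.piEE_eq hP⟩
end

section
/- For every palette 𝒫 and every ν>0 there exist C>0 and N∈ℕ such that: if H is a 3-graph on n>N vertices which satisfies 𝒫 and H is (d,η,▽)-dense for some d∈[0,1] and η>0, then d ≤ Λ^▽_𝒫 + Cη + ν. -/
/-!
Let `H` be ordered by `ord` and its pairs coloured by `φ` so that the edges obey the palette. If
`X`, `Y`, `Z` are large vertex sets with `X < Y < Z` in the ordering, and all three pairs are
regular for every colour class with (almost) the same density vector `q`, then the counting lemma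
(`triangle_count`, `eVVV_le`) shows that at most about `λ(q) |X||Y||Z|` triples are edges, while
density of `H` demands at least `d |X||Y||Z| - η n³`. As the entries of `q` sum to about `1`
(`sum_density_le`), homogeneity gives `λ(q) ≲ Λ` (`lamVVV_le`), and since `X`, `Y`, `Z` have size at
least `c n`, the term `η n³` costs at most `η / c³` after division.

To find such sets, cut the vertex set into a bounded number of consecutive blocks, shrink them by a
bounded factor so that all pairs become regular for all colours (`exists_cutReg_family`), round the
density vectors to finitely many values, and apply Ramsey's theorem to the resulting colouring of
the pairs of blocks (`exists_mono_triangle`). Regularity is only needed in the additive cut-norm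
sense, and only for suitable subsets of the blocks rather than for a whole partition. Hence a
density increment argument, one pair and one colour at a time, replaces the regularity lemma: a
regular pair stays regular, with the same density and a controlled loss in the error, when its
two sides are shrunk further (`CutReg.mono`).
-/

open Finset

/-! ### Regular pairs by density increment -/

/-- The weight `∑_{x ∈ X, y ∈ Y} f x y` of the pair `(X, Y)`. -/
def pairSum (f : ℕ → ℕ → ℝ) (X Y : Finset ℕ) : ℝ := ∑ x ∈ X, ∑ y ∈ Y, f x y

/-- `(A, B)` is `ε`-regular in the cut-norm sense for `f` with density `p`. The error is measured
against `|A||B|` and `p` need not be the exact density of `(A, B)`, so the property passes, with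
the same `p`, to large subsets of `A` and `B`. -/
def CutReg (f : ℕ → ℕ → ℝ) (A B : Finset ℕ) (p ε : ℝ) : Prop :=
  ∀ X ⊆ A, ∀ Y ⊆ B, |pairSum f X Y - p * (X.card * Y.card)| ≤ ε * (A.card * B.card)

lemma pairSum_nonneg {f : ℕ → ℕ → ℝ} (h0 : ∀ x y, 0 ≤ f x y) (X Y : Finset ℕ) :
    0 ≤ pairSum f X Y :=
  sum_nonneg fun x _ => sum_nonneg fun y _ => h0 x y

lemma pairSum_le {f : ℕ → ℕ → ℝ} (h1 : ∀ x y, f x y ≤ 1) (X Y : Finset ℕ) :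
    pairSum f X Y ≤ X.card * Y.card := by
  unfold pairSum
  calc _ ≤ ∑ x ∈ X, ∑ y ∈ Y, (1 : ℝ) := sum_le_sum fun x _ => sum_le_sum fun y _ => h1 x y
    _ = _ := by simp

/-- An upper bound on all subpairs, relative to the exact density, is automatically two-sided:
the weight of `(X, Y)` is the total weight minus those of `(A \ X, B)` and `(X, B \ Y)`. -/
lemma cutReg_of_upper {f : ℕ → ℕ → ℝ} {A B : Finset ℕ} {p ε : ℝ} (hε : 0 ≤ ε)
    (hp : pairSum f A B = p * (A.card * B.card))
    (h : ∀ X ⊆ A, ∀ Y ⊆ B, pairSum f X Y ≤ p * (X.card * Y.card) + ε / 2 * (A.card * B.card)) :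
    CutReg f A B p ε := by
  intro X hX Y hY
  have e1 : pairSum f (A \ X) B + pairSum f X B = pairSum f A B := sum_sdiff hX
  have e2 : pairSum f X (B \ Y) + pairSum f X Y = pairSum f X B := by
    unfold pairSum
    rw [← sum_add_distrib]
    exact sum_congr rfl fun x _ => sum_sdiff hY
  have c1 : ((A \ X).card : ℝ) + X.card = A.card := by
    exact_mod_cast card_sdiff_add_card_eq_card hX
  have c2 : ((B \ Y).card : ℝ) + Y.card = B.card := by
    exact_mod_cast card_sdiff_add_card_eq_card hY
  have h1 := h (A \ X) sdiff_subset B subset_rfl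
  have h2 := h X hX (B \ Y) sdiff_subset
  have h3 := h X hX Y hY
  have hAB : 0 ≤ ε * ((A.card : ℝ) * B.card) := by positivity
  rw [show ((A \ X).card : ℝ) = A.card - X.card by linarith] at h1
  rw [show ((B \ Y).card : ℝ) = B.card - Y.card by linarith] at h2
  rw [abs_le]
  constructor <;> nlinarith

/-- Regularity passes to subpairs of relative sizes `δ₁`, `δ₂`, at the cost of a factor
`1 / (δ₁ δ₂)` in the error. -/
lemma CutReg.mono {f : ℕ → ℕ → ℝ} {A B A' B' : Finset ℕ} {p ε ε' δ₁ δ₂ : ℝ}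
    (h : CutReg f A B p ε) (hA : A' ⊆ A) (hB : B' ⊆ B) (hδ₂ : 0 ≤ δ₂)
    (hε' : 0 ≤ ε') (cA : δ₁ * A.card ≤ A'.card) (cB : δ₂ * B.card ≤ B'.card)
    (hε : ε ≤ ε' * (δ₁ * δ₂)) :
    CutReg f A' B' p ε' := by
  intro X hX Y hY
  refine (h X (hX.trans hA) Y (hY.trans hB)).trans ?_
  calc ε * ((A.card : ℝ) * B.card) ≤ ε' * (δ₁ * δ₂) * ((A.card : ℝ) * B.card) := by gcongr
    _ = ε' * ((δ₁ * A.card) * (δ₂ * B.card)) := by ring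
    _ ≤ _ := by gcongr

/-- Density increment: a pair of density at least `1 - n ε / 2` has a regular subpair, because an
irregular pair contains a large subpair of density larger by `ε / 2`. -/
lemma exists_cutReg_aux {ε : ℝ} (hε : 0 < ε) (n : ℕ) :
    ∃ δ : ℝ, 0 < δ ∧ δ ≤ 1 ∧ ∀ f : ℕ → ℕ → ℝ, (∀ x y, 0 ≤ f x y) → (∀ x y, f x y ≤ 1) →
      ∀ A B : Finset ℕ, A.Nonempty → B.Nonempty →
      (1 - n * (ε / 2)) * (A.card * B.card) ≤ pairSum f A B →
      ∃ A' ⊆ A, ∃ B' ⊆ B, δ * A.card ≤ A'.card ∧ δ * B.card ≤ B'.card ∧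
        ∃ p : ℝ, 0 ≤ p ∧ p ≤ 1 ∧ CutReg f A' B' p ε := by
  induction n with
  | zero =>
    refine ⟨1, one_pos, le_rfl, fun f h0 h1 A B hA hB hd => ⟨A, subset_rfl, B, subset_rfl,
      by simp, by simp, 1, zero_le_one, le_rfl, ?_⟩⟩
    refine cutReg_of_upper hε.le ?_ ?_
    · have := pairSum_le h1 A B
      norm_num at hd
      linarith
    · intro X _ Y _
      have := pairSum_le h1 X Y
      have : 0 ≤ ε / 2 * ((A.card : ℝ) * B.card) := by positivity
      linarith
  | succ n ih =>
    obtain ⟨δ, hδ, hδ1, H⟩ := ih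
    refine ⟨δ * min 1 (ε / 2), by positivity, ?_, fun f h0 h1 A B hA hB hd => ?_⟩
    · exact mul_le_one₀ hδ1 (by positivity) (min_le_left _ _)
    have hm : δ * min 1 (ε / 2) ≤ 1 := mul_le_one₀ hδ1 (by positivity) (min_le_left _ _)
    have cA : (0 : ℝ) < A.card := by exact_mod_cast hA.card_pos
    have cB : (0 : ℝ) < B.card := by exact_mod_cast hB.card_pos
    obtain ⟨p, hp⟩ : ∃ p : ℝ, pairSum f A B = p * (A.card * B.card) :=
      ⟨pairSum f A B / (A.card * B.card), by field_simp⟩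
    have hp0 : 0 ≤ p := by
      have := pairSum_nonneg h0 A B
      rw [hp] at this
      exact nonneg_of_mul_nonneg_left this (by positivity)
    have hp1 : p ≤ 1 := by
      have := pairSum_le h1 A B
      rw [hp] at this
      exact (mul_le_iff_le_one_left (by positivity)).1 this
    by_cases h : ∀ X ⊆ A, ∀ Y ⊆ B,
        pairSum f X Y ≤ p * (X.card * Y.card) + ε / 2 * (A.card * B.card)
    · refine ⟨A, subset_rfl, B, subset_rfl, ?_, ?_, p, hp0, hp1, cutReg_of_upper hε.le hp h⟩
      · nlinarith
      · nlinarith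
    · push Not at h
      obtain ⟨X, hX, Y, hY, hXY⟩ := h
      have cX : (X.card : ℝ) ≤ A.card := by exact_mod_cast card_le_card hX
      have cY : (Y.card : ℝ) ≤ B.card := by exact_mod_cast card_le_card hY
      have hu := pairSum_le h1 X Y
      have hpXY : 0 ≤ p * ((X.card : ℝ) * Y.card) := by positivity
      have hbig : ε / 2 * ((A.card : ℝ) * B.card) ≤ X.card * Y.card := by linarith
      have gX : ε / 2 * A.card ≤ X.card := by
        have : (ε / 2 * A.card) * B.card ≤ X.card * B.card := by
          calc _ = ε / 2 * ((A.card : ℝ) * B.card) := by ring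
            _ ≤ _ := hbig
            _ ≤ _ := by gcongr
        exact le_of_mul_le_mul_right this cB
      have gY : ε / 2 * B.card ≤ Y.card := by
        have : (ε / 2 * B.card) * A.card ≤ Y.card * A.card := by
          calc _ = ε / 2 * ((A.card : ℝ) * B.card) := by ring
            _ ≤ _ := hbig
            _ = (Y.card : ℝ) * X.card := by ring
            _ ≤ _ := by gcongr
        exact le_of_mul_le_mul_right this cA
      have pX : 0 < X.card := by
        have : (0 : ℝ) < X.card := lt_of_lt_of_le (by positivity) gX
        exact_mod_cast this
      have pY : 0 < Y.card := by
        have : (0 : ℝ) < Y.card := lt_of_lt_of_le (by positivity) gY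
        exact_mod_cast this
      have hpn : 1 - ((n + 1 : ℕ) : ℝ) * (ε / 2) ≤ p := by
        rw [hp] at hd
        exact le_of_mul_le_mul_right hd (by positivity)
      obtain ⟨A', hA', B', hB', kA, kB, q, hq⟩ := H f h0 h1 X Y (card_pos.1 pX) (card_pos.1 pY) (by
        have e1 : ε / 2 * ((X.card : ℝ) * Y.card) ≤ ε / 2 * (A.card * B.card) := by gcongr
        have e2 : (1 - (n : ℝ) * (ε / 2)) * ((X.card : ℝ) * Y.card)
            ≤ (p + ε / 2) * ((X.card : ℝ) * Y.card) := by
          gcongr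
          push_cast at hpn
          linarith
        linarith)
      refine ⟨A', hA'.trans hX, B', hB'.trans hY, ?_, ?_, q, hq⟩
      · calc δ * min 1 (ε / 2) * A.card ≤ δ * (ε / 2) * A.card := by
              gcongr
              exact min_le_right _ _
          _ = δ * (ε / 2 * A.card) := by ring
          _ ≤ δ * X.card := by gcongr
          _ ≤ _ := kA
      · calc δ * min 1 (ε / 2) * B.card ≤ δ * (ε / 2) * B.card := by
              gcongr
              exact min_le_right _ _
          _ = δ * (ε / 2 * B.card) := by ring
          _ ≤ δ * Y.card := by gcongr
          _ ≤ _ := kB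

lemma exists_cutReg {ε : ℝ} (hε : 0 < ε) :
    ∃ δ : ℝ, 0 < δ ∧ δ ≤ 1 ∧ ∀ f : ℕ → ℕ → ℝ, (∀ x y, 0 ≤ f x y) → (∀ x y, f x y ≤ 1) →
      ∀ A B : Finset ℕ, A.Nonempty → B.Nonempty →
      ∃ A' ⊆ A, ∃ B' ⊆ B, δ * A.card ≤ A'.card ∧ δ * B.card ≤ B'.card ∧
        ∃ p : ℝ, 0 ≤ p ∧ p ≤ 1 ∧ CutReg f A' B' p ε := by
  obtain ⟨n, hn⟩ := exists_nat_gt (1 / (ε / 2))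
  obtain ⟨δ, hδ, hδ1, H⟩ := exists_cutReg_aux hε n
  refine ⟨δ, hδ, hδ1, fun f h0 h1 A B hA hB => H f h0 h1 A B hA hB ?_⟩
  rw [div_lt_iff₀ (by positivity)] at hn
  refine le_trans ?_ (pairSum_nonneg h0 A B)
  exact mul_nonpos_of_nonpos_of_nonneg (by linarith) (by positivity)

/-- Simultaneous regularisation: given finitely many triples `(i, j, a)`, all the sets `A i` can be
shrunk by a bounded factor so that each pair `(A i, A j)` is regular for the corresponding `f a`.
The triples are treated one at a time; those treated earlier are made regular with so small an
error that they survive the later shrinking. -/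
lemma exists_cutReg_family (T : Finset (ℕ × ℕ × ℕ)) (hT : ∀ t ∈ T, t.1 ≠ t.2.1) :
    ∀ ε : ℝ, 0 < ε → ∃ δ : ℝ, 0 < δ ∧ δ ≤ 1 ∧ ∀ f : ℕ → ℕ → ℕ → ℝ,
      (∀ a x y, 0 ≤ f a x y) → (∀ a x y, f a x y ≤ 1) →
      ∀ A : ℕ → Finset ℕ, (∀ i, (A i).Nonempty) →
      ∃ A' : ℕ → Finset ℕ, (∀ i, A' i ⊆ A i) ∧ (∀ i, δ * (A i).card ≤ (A' i).card) ∧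
        ∀ t ∈ T, ∃ p : ℝ, 0 ≤ p ∧ p ≤ 1 ∧ CutReg (f t.2.2) (A' t.1) (A' t.2.1) p ε := by
  induction T using Finset.induction_on with
  | empty =>
    intro ε hε
    exact ⟨1, one_pos, le_rfl, fun f _ _ A _ => ⟨A, fun i => subset_rfl, fun i => by simp,
      fun t ht => by simp at ht⟩⟩
  | insert t T htT ih =>
    intro ε hε
    obtain ⟨δ₀, hδ₀, hδ₀1, H₀⟩ := exists_cutReg hε
    obtain ⟨δ₁, hδ₁, hδ₁1, H₁⟩ := ih (fun t ht => hT t (mem_insert_of_mem ht)) (ε * (δ₀ * δ₀))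
      (by positivity)
    refine ⟨δ₀ * δ₁, by positivity, mul_le_one₀ hδ₀1 hδ₁.le hδ₁1, fun f h0 h1 A hA => ?_⟩
    obtain ⟨A₁, hA₁, cA₁, hreg⟩ := H₁ f h0 h1 A hA
    have ne₁ : ∀ i, (A₁ i).Nonempty := by
      intro i
      have h2 : (0 : ℝ) < (A i).card := by exact_mod_cast (hA i).card_pos
      have : (0 : ℝ) < (A₁ i).card := lt_of_lt_of_le (by positivity) (cA₁ i)
      exact card_pos.1 (by exact_mod_cast this)
    obtain ⟨X, hX, Y, hY, cX, cY, p, hp0, hp1, hp⟩ :=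
      H₀ (f t.2.2) (h0 _) (h1 _) (A₁ t.1) (A₁ t.2.1) (ne₁ _) (ne₁ _)
    have hne : t.1 ≠ t.2.1 := hT t (mem_insert_self _ _)
    obtain ⟨A₂, hA₂⟩ : ∃ A₂ : ℕ → Finset ℕ,
        A₂ = Function.update (Function.update A₁ t.1 X) t.2.1 Y := ⟨_, rfl⟩
    have v1 : A₂ t.1 = X := by simp [hA₂, hne]
    have v2 : A₂ t.2.1 = Y := by simp [hA₂]
    have v3 : ∀ i, i ≠ t.1 → i ≠ t.2.1 → A₂ i = A₁ i := by
      intro i hi hj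
      simp [hA₂, hi, hj]
    have hsub : ∀ i, A₂ i ⊆ A₁ i ∧ δ₀ * (A₁ i).card ≤ (A₂ i).card := by
      intro i
      by_cases hi : i = t.1
      · subst hi
        rw [v1]
        exact ⟨hX, cX⟩
      · by_cases hj : i = t.2.1
        · subst hj
          rw [v2]
          exact ⟨hY, cY⟩
        · rw [v3 i hi hj]
          exact ⟨subset_rfl, mul_le_of_le_one_left (by positivity) hδ₀1⟩
    refine ⟨A₂, fun i => (hsub i).1.trans (hA₁ i), fun i => ?_, fun s hs => ?_⟩
    · calc δ₀ * δ₁ * (A i).card = δ₀ * (δ₁ * (A i).card) := by ring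
        _ ≤ δ₀ * (A₁ i).card := by
          gcongr
          exact cA₁ i
        _ ≤ _ := (hsub i).2
    · rcases mem_insert.1 hs with rfl | hs
      · exact ⟨p, hp0, hp1, by rw [v1, v2]; exact hp⟩
      · obtain ⟨q, hq0, hq1, hq⟩ := hreg s hs
        exact ⟨q, hq0, hq1, hq.mono (hsub _).1 (hsub _).1 hδ₀.le hε.le (hsub _).2
          (hsub _).2 le_rfl⟩

/-! ### Monochromatic triangles and ordered blocks -/

/-- Ramsey's theorem for monochromatic triangles: each point in turn is joined in a popular colour
to many later points, and either that colour occurs again among those or one colour is used up. -/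
lemma exists_mono_triangle {κ : Type*} [DecidableEq κ] (c : ℕ) :
    ∃ m : ℕ, ∀ S : Finset κ, S.card ≤ c → ∀ (col : ℕ → ℕ → κ) (T : Finset ℕ), m ≤ T.card →
      (∀ i ∈ T, ∀ j ∈ T, i < j → col i j ∈ S) →
      ∃ i ∈ T, ∃ j ∈ T, ∃ k ∈ T, i < j ∧ j < k ∧ col j k = col i j ∧ col i k = col i j := by
  induction c with
  | zero =>
    refine ⟨2, fun S hS col T hT h => ?_⟩
    obtain ⟨i, hi, j, hj, hij⟩ := one_lt_card.1 hT
    have hS0 : S = ∅ := card_eq_zero.1 (by omega)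
    subst hS0
    rcases lt_or_gt_of_ne hij with h' | h'
    · simpa using h i hi j hj h'
    · simpa using h j hj i hi h'
  | succ c ih =>
    obtain ⟨m, H⟩ := ih
    refine ⟨(c + 1) * m + 2, fun S hS col T hT h => ?_⟩
    have hne : T.Nonempty := card_pos.1 (by omega)
    obtain ⟨i, hi⟩ : ∃ i, i = T.min' hne := ⟨_, rfl⟩
    have hiT : i ∈ T := hi ▸ T.min'_mem hne
    have hlt : ∀ j ∈ T.erase i, i < j := by
      intro j hj
      have := T.min'_le j (mem_of_mem_erase hj)
      exact lt_of_le_of_ne (hi ▸ this) (ne_of_mem_erase hj).symm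
    have hcard : S.card * m < (T.erase i).card := by
      rw [card_erase_of_mem hiT]
      have := Nat.mul_le_mul_right m hS
      omega
    obtain ⟨s, hs, hfib⟩ := exists_lt_card_fiber_of_mul_lt_card_of_maps_to (f := fun j => col i j)
      (fun j hj => h i hiT j (mem_of_mem_erase hj) (hlt j hj)) hcard
    obtain ⟨F, hF⟩ : ∃ F, F = (T.erase i).filter (fun j => col i j = s) := ⟨_, rfl⟩
    have memF : ∀ j ∈ F, j ∈ T ∧ i < j ∧ col i j = s := by
      intro j hj
      rw [hF, mem_filter] at hj
      exact ⟨mem_of_mem_erase hj.1, hlt j hj.1, hj.2⟩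
    by_cases hjk : ∃ j ∈ F, ∃ k ∈ F, j < k ∧ col j k = s
    · obtain ⟨j, hj, k, hk, hjk, hc⟩ := hjk
      obtain ⟨a1, a2, a3⟩ := memF j hj
      obtain ⟨b1, b2, b3⟩ := memF k hk
      exact ⟨i, hiT, j, a1, k, b1, a2, hjk, by rw [hc, a3], by rw [b3, a3]⟩
    · push Not at hjk
      obtain ⟨x, hx, y, hy, z, hz, r⟩ := H (S.erase s) (by rw [card_erase_of_mem hs]; omega) col F
        (by rw [hF]; exact hfib.le) (fun j hj k hk hlt' => mem_erase.2
          ⟨hjk j hj k hk hlt', h j (memF j hj).1 k (memF k hk).1 hlt'⟩)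
      exact ⟨x, (memF x hx).1, y, (memF y hy).1, z, (memF z hz).1, r⟩

/-- The first `m * L` vertices in the ordering `ord` split into `m` consecutive blocks. -/
lemma exists_ordered_blocks (V : Finset ℕ) (ord : ℕ → ℕ) (hord : Set.InjOn ord ↑V) (m L : ℕ)
    (hmL : m * L ≤ V.card) :
    ∃ A : ℕ → Finset ℕ, (∀ i < m, A i ⊆ V) ∧ (∀ i < m, (A i).card = L) ∧
      ∀ i j, i < j → j < m → ∀ x ∈ A i, ∀ y ∈ A j, ord x < ord y := by
  have hc : (V.image ord).card = V.card := card_image_of_injOn hord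
  obtain ⟨e, he⟩ : ∃ e, e = (V.image ord).orderEmbOfFin hc := ⟨_, rfl⟩
  have hg : ∀ i : ℕ, ∃ v, ∀ h : i < V.card, v ∈ V ∧ ord v = e ⟨i, h⟩ := by
    intro i
    by_cases h : i < V.card
    · have := (V.image ord).orderEmbOfFin_mem hc ⟨i, h⟩
      rw [← he] at this
      obtain ⟨v, hv, hv'⟩ := mem_image.1 this
      exact ⟨v, fun _ => ⟨hv, hv'⟩⟩
    · exact ⟨0, fun h' => absurd h' h⟩
  choose g hg using hg
  have hmono : ∀ i j, i < j → j < V.card → ord (g i) < ord (g j) := by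
    intro i j hij hj
    rw [(hg i (hij.trans hj)).2, (hg j hj).2]
    exact e.strictMono hij
  have hbd : ∀ i < m, (i + 1) * L ≤ V.card := fun i hi =>
    (Nat.mul_le_mul_right L hi).trans hmL
  refine ⟨fun i => (Ico (i * L) ((i + 1) * L)).image g, fun i hi x hx => ?_, fun i hi => ?_,
    fun i j hij hj x hx y hy => ?_⟩
  · obtain ⟨t, ht, rfl⟩ := mem_image.1 hx
    exact (hg t ((mem_Ico.1 ht).2.trans_le (hbd i hi))).1
  · rw [card_image_of_injOn, Nat.card_Ico, Nat.succ_mul]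
    · omega
    · intro s hs t ht hst
      have hs' := (mem_Ico.1 hs).2.trans_le (hbd i hi)
      have ht' := (mem_Ico.1 ht).2.trans_le (hbd i hi)
      by_contra hne
      rcases lt_or_gt_of_ne hne with h | h
      · exact absurd (congrArg ord hst) (hmono s t h ht').ne
      · exact absurd (congrArg ord hst) (hmono t s h hs').ne'
  · obtain ⟨s, hs, rfl⟩ := mem_image.1 hx
    obtain ⟨t, ht, rfl⟩ := mem_image.1 hy
    refine hmono s t ?_ ((mem_Ico.1 ht).2.trans_le (hbd j hj))
    exact (mem_Ico.1 hs).2.trans_le ((Nat.mul_le_mul_right L hij).trans (mem_Ico.1 ht).1)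

/-! ### Counting triangles -/

/-- Counting lemma, upper bound: the three factors are replaced by their densities one at a
time. While the third vertex is fixed, the first factor is summed over a product of two
neighbourhoods, to which the cut-norm bound applies. -/
lemma triangle_count {R S T : ℕ → ℕ → Prop} [∀ x y, Decidable (R x y)] [∀ x y, Decidable (S x y)]
    [∀ x y, Decidable (T x y)] {X Y Z : Finset ℕ} {p q r ε : ℝ} (hp : 0 ≤ p) (hp2 : p ≤ 2)
    (hq : 0 ≤ q) (hq2 : q ≤ 2) (hε : 0 ≤ ε)
    (hR : ∀ X' ⊆ X, ∀ Y' ⊆ Y, pairSum (fun x y => if R x y then 1 else 0) X' Y'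
      ≤ p * (X'.card * Y'.card) + ε * (X.card * Y.card))
    (hS : ∀ Y' ⊆ Y, ∀ Z' ⊆ Z, pairSum (fun x y => if S x y then 1 else 0) Y' Z'
      ≤ q * (Y'.card * Z'.card) + ε * (Y.card * Z.card))
    (hT : ∀ X' ⊆ X, ∀ Z' ⊆ Z, pairSum (fun x y => if T x y then 1 else 0) X' Z'
      ≤ r * (X'.card * Z'.card) + ε * (X.card * Z.card)) :
    (((X ×ˢ Y ×ˢ Z).filter fun t => R t.1 t.2.1 ∧ S t.2.1 t.2.2 ∧ T t.1 t.2.2).card : ℝ)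
      ≤ (p * q * r + 7 * ε) * (X.card * Y.card * Z.card) := by
  have comm3 : ∀ F : ℕ → ℕ → ℕ → ℝ,
      ∑ x ∈ X, ∑ y ∈ Y, ∑ z ∈ Z, F x y z = ∑ z ∈ Z, ∑ x ∈ X, ∑ y ∈ Y, F x y z := by
    intro F
    rw [sum_comm (s := Z) (t := X)]
    exact sum_congr rfl fun x _ => sum_comm
  have key1 : (((X ×ˢ Y ×ˢ Z).filter fun t => R t.1 t.2.1 ∧ S t.2.1 t.2.2 ∧ T t.1 t.2.2).card : ℝ)
      = ∑ z ∈ Z, pairSum (fun x y => if R x y then 1 else 0)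
          (X.filter fun x => T x z) (Y.filter fun y => S y z) := by
    rw [card_filter]
    push_cast
    simp only [pairSum, sum_filter, sum_product]
    rw [comm3]
    refine sum_congr rfl fun z _ => sum_congr rfl fun x _ => ?_
    by_cases hx : T x z
    · simp only [hx, if_true, and_true]
      refine sum_congr rfl fun y _ => ?_
      by_cases hy : S y z <;> simp [hy]
    · simp [hx]
  have key2 : ∑ z ∈ Z, ((X.filter fun x => T x z).card : ℝ) * (Y.filter fun y => S y z).card
      = ∑ x ∈ X, pairSum (fun x y => if S x y then 1 else 0) Y (Z.filter fun z => T x z) := by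
    simp only [pairSum, sum_filter, card_filter]
    push_cast
    simp only [sum_mul_sum]
    rw [← comm3]
    refine sum_congr rfl fun x _ => sum_congr rfl fun y _ => sum_congr rfl fun z _ => ?_
    by_cases hx : T x z <;> simp [hx]
  have key3 : ∑ x ∈ X, ((Z.filter fun z => T x z).card : ℝ)
      = pairSum (fun x y => if T x y then 1 else 0) X Z := by
    simp only [pairSum, card_filter]
    push_cast
    rfl
  have step1 : ∑ z ∈ Z, pairSum (fun x y => if R x y then 1 else 0)
        (X.filter fun x => T x z) (Y.filter fun y => S y z)
      ≤ p * ∑ z ∈ Z, ((X.filter fun x => T x z).card : ℝ) * (Y.filter fun y => S y z).card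
        + ε * (X.card * Y.card * Z.card) := by
    refine (sum_le_sum fun z _ => hR _ (filter_subset _ _) _ (filter_subset _ _)).trans_eq ?_
    rw [sum_add_distrib, mul_sum, sum_const, nsmul_eq_mul]
    ring
  have step2 : ∑ x ∈ X, pairSum (fun x y => if S x y then 1 else 0) Y (Z.filter fun z => T x z)
      ≤ q * Y.card * ∑ x ∈ X, ((Z.filter fun z => T x z).card : ℝ)
        + ε * (X.card * Y.card * Z.card) := by
    refine (sum_le_sum fun x _ => hS Y subset_rfl _ (filter_subset _ _)).trans_eq ?_
    rw [sum_add_distrib, mul_sum, sum_const, nsmul_eq_mul]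
    congr 1
    · exact sum_congr rfl fun x _ => by ring
    · ring
  have step3 := hT X subset_rfl Z subset_rfl
  rw [← key1] at step1
  rw [← key2] at step2
  rw [← key3] at step3
  have hV : 0 ≤ ε * ((X.card : ℝ) * Y.card * Z.card) := by positivity
  calc _ ≤ _ := step1
    _ ≤ p * (q * Y.card * (r * (X.card * Z.card) + ε * (X.card * Z.card))
          + ε * (X.card * Y.card * Z.card)) + ε * (X.card * Y.card * Z.card) := by
        gcongr
        refine step2.trans ?_
        gcongr
    _ = p * q * r * (X.card * Y.card * Z.card)
          + (p * q + p + 1) * (ε * (X.card * Y.card * Z.card)) := by ring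
    _ ≤ p * q * r * (X.card * Y.card * Z.card)
          + (2 * 2 + 2 + 1) * (ε * (X.card * Y.card * Z.card)) := by gcongr
    _ = _ := by ring

/-! ### The palette Lagrangian -/

lemma palColours_mem {P : Palette} {t : ℕ × ℕ × ℕ} (ht : t ∈ P) :
    t.1 ∈ palColours P ∧ t.2.1 ∈ palColours P ∧ t.2.2 ∈ palColours P := by
  simp only [palColours, mem_union, mem_image]
  exact ⟨Or.inl (Or.inl ⟨t, ht, rfl⟩), Or.inl (Or.inr ⟨t, ht, rfl⟩), Or.inr ⟨t, ht, rfl⟩⟩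

lemma lamVVV_nonneg {P : Palette} {x : ℕ → ℝ} (hx : ∀ a ∈ palColours P, 0 ≤ x a) :
    0 ≤ lamVVV P x := by
  refine sum_nonneg fun t ht => ?_
  obtain ⟨h1, h2, h3⟩ := palColours_mem ht
  have := hx _ h1
  have := hx _ h2
  have := hx _ h3
  positivity

lemma lamVVV_le_card {P : Palette} {x : ℕ → ℝ} (hx : IsWeighting P x) :
    lamVVV P x ≤ P.card := by
  have h1 : ∀ a ∈ palColours P, x a ≤ 1 := fun a ha => by
    rw [← hx.2]
    exact single_le_sum hx.1 ha
  calc lamVVV P x ≤ ∑ t ∈ P, (1 : ℝ) := by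
        refine sum_le_sum fun t ht => ?_
        obtain ⟨m1, m2, m3⟩ := palColours_mem ht
        exact mul_le_one₀ (mul_le_one₀ (h1 _ m1) (hx.1 _ m2) (h1 _ m2)) (hx.1 _ m3) (h1 _ m3)
    _ = P.card := by simp

lemma LambdaVVV_nonneg (P : Palette) : 0 ≤ LambdaVVV P := by
  refine Real.sSup_nonneg ?_
  rintro l ⟨x, hx, rfl⟩
  exact lamVVV_nonneg hx.1

lemma LambdaVVV_le_card (P : Palette) : LambdaVVV P ≤ P.card := by
  refine Real.sSup_le ?_ (by positivity)
  rintro l ⟨x, hx, rfl⟩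
  exact lamVVV_le_card hx

/-- Homogeneous form of the definition of the Lagrangian. -/
lemma lamVVV_le {P : Palette} {x : ℕ → ℝ} (hx : ∀ a ∈ palColours P, 0 ≤ x a) :
    lamVVV P x ≤ LambdaVVV P * (∑ a ∈ palColours P, x a) ^ 3 := by
  obtain ⟨s, hs⟩ : ∃ s, s = ∑ a ∈ palColours P, x a := ⟨_, rfl⟩
  have hs0 : 0 ≤ s := hs ▸ sum_nonneg hx
  rw [← hs]
  rcases hs0.eq_or_lt with h | h
  · have hz : ∀ a ∈ palColours P, x a = 0 := (sum_eq_zero_iff_of_nonneg hx).1 (by rw [← hs, ← h])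
    have : lamVVV P x = 0 := sum_eq_zero fun t ht => by
      rw [hz _ (palColours_mem ht).1]
      ring
    rw [this, ← h]
    simp
  · have hw : IsWeighting P (fun a => x a / s) := by
      refine ⟨fun a ha => div_nonneg (hx a ha) hs0, ?_⟩
      rw [← sum_div, ← hs, div_self h.ne']
    have hle : lamVVV P (fun a => x a / s) ≤ LambdaVVV P := by
      refine le_csSup ⟨P.card, ?_⟩ ⟨_, hw, rfl⟩
      rintro l ⟨y, hy, rfl⟩
      exact lamVVV_le_card hy
    have heq : lamVVV P x = lamVVV P (fun a => x a / s) * s ^ 3 := by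
      unfold lamVVV
      rw [sum_mul]
      refine sum_congr rfl fun t _ => ?_
      field_simp
    rw [heq]
    gcongr

/-! ### Edges of a palette colouring across regular blocks -/

/-- Edges across three blocks in increasing order are coloured as the palette prescribes, so the counting
lemma bounds their number by the Lagrange polynomial at a common density vector `q`. -/
lemma eVVV_le {P : Palette} {H : ThreeGraph} {ord : ℕ → ℕ} {φ : Finset ℕ → ℕ}
    (hφ : ∀ u v w : ℕ, ({u, v, w} : Finset ℕ) ∈ H.edges → ord u < ord v → ord v < ord w →
      (φ {u, v}, φ {v, w}, φ {u, w}) ∈ P)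
    {X Y Z : Finset ℕ} (hXY : ∀ x ∈ X, ∀ y ∈ Y, ord x < ord y)
    (hYZ : ∀ y ∈ Y, ∀ z ∈ Z, ord y < ord z) {q : ℕ → ℝ} {ε : ℝ} (hε : 0 ≤ ε)
    (hq : ∀ a ∈ palColours P, 0 ≤ q a ∧ q a ≤ 2)
    (h1 : ∀ a ∈ palColours P, ∀ X' ⊆ X, ∀ Y' ⊆ Y,
      pairSum (fun x y => if φ {x, y} = a then 1 else 0) X' Y'
        ≤ q a * (X'.card * Y'.card) + ε * (X.card * Y.card))
    (h2 : ∀ a ∈ palColours P, ∀ Y' ⊆ Y, ∀ Z' ⊆ Z,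
      pairSum (fun x y => if φ {x, y} = a then 1 else 0) Y' Z'
        ≤ q a * (Y'.card * Z'.card) + ε * (Y.card * Z.card))
    (h3 : ∀ a ∈ palColours P, ∀ X' ⊆ X, ∀ Z' ⊆ Z,
      pairSum (fun x y => if φ {x, y} = a then 1 else 0) X' Z'
        ≤ q a * (X'.card * Z'.card) + ε * (X.card * Z.card)) :
    (eVVV H X Y Z : ℝ) ≤ (lamVVV P q + P.card * (7 * ε)) * (X.card * Y.card * Z.card) := by
  have hsub : ((X ×ˢ Y ×ˢ Z).filter fun p => ({p.1, p.2.1, p.2.2} : Finset ℕ) ∈ H.edges) ⊆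
      P.biUnion fun t => (X ×ˢ Y ×ˢ Z).filter fun p =>
        φ {p.1, p.2.1} = t.1 ∧ φ {p.2.1, p.2.2} = t.2.1 ∧ φ {p.1, p.2.2} = t.2.2 := by
    intro p hp
    obtain ⟨hp, he⟩ := mem_filter.1 hp
    have hp' := hp
    simp only [mem_product] at hp'
    exact mem_biUnion.2 ⟨_, hφ _ _ _ he (hXY _ hp'.1 _ hp'.2.1) (hYZ _ hp'.2.1 _ hp'.2.2),
      mem_filter.2 ⟨hp, rfl, rfl, rfl⟩⟩
  have hcard := (card_le_card hsub).trans card_biUnion_le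
  have hcard' : (eVVV H X Y Z : ℝ) ≤ ∑ t ∈ P, (((X ×ˢ Y ×ˢ Z).filter fun p =>
        φ {p.1, p.2.1} = t.1 ∧ φ {p.2.1, p.2.2} = t.2.1 ∧ φ {p.1, p.2.2} = t.2.2).card : ℝ) := by
    exact_mod_cast hcard
  refine hcard'.trans ?_
  calc _ ≤ ∑ t ∈ P, (q t.1 * q t.2.1 * q t.2.2 + 7 * ε) * (X.card * Y.card * Z.card) := by
        refine sum_le_sum fun t ht => ?_
        obtain ⟨m1, m2, m3⟩ := palColours_mem ht
        exact triangle_count (R := fun x y => φ {x, y} = t.1) (S := fun x y => φ {x, y} = t.2.1)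
          (T := fun x y => φ {x, y} = t.2.2) (hq _ m1).1 (hq _ m1).2 (hq _ m2).1 (hq _ m2).2 hε
          (h1 _ m1) (h2 _ m2) (h3 _ m3)
    _ = _ := by
        rw [← sum_mul, sum_add_distrib, sum_const, nsmul_eq_mul]
        rfl

lemma CutReg.upper {f : ℕ → ℕ → ℝ} {A B : Finset ℕ} {p q ε : ℝ} (h : CutReg f A B p ε)
    (hpq : p ≤ q) : ∀ X ⊆ A, ∀ Y ⊆ B,
      pairSum f X Y ≤ q * (X.card * Y.card) + ε * (A.card * B.card) := by
  intro X hX Y hY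
  have h1 := (abs_le.1 (h X hX Y hY)).2
  have h2 : p * ((X.card : ℝ) * Y.card) ≤ q * (X.card * Y.card) := by gcongr
  linarith

/-- The densities of the colour classes add up to at most `1`, up to the regularity error. -/
lemma sum_density_le {Φ A B : Finset ℕ} {φ : Finset ℕ → ℕ} {p : ℕ → ℝ} {ε : ℝ}
    (hA : A.Nonempty) (hB : B.Nonempty)
    (h : ∀ a ∈ Φ, CutReg (fun x y => if φ {x, y} = a then 1 else 0) A B (p a) ε) :
    ∑ a ∈ Φ, p a ≤ 1 + Φ.card * ε := by
  have cA : (0 : ℝ) < A.card := by exact_mod_cast hA.card_pos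
  have cB : (0 : ℝ) < B.card := by exact_mod_cast hB.card_pos
  have h1 : ∑ a ∈ Φ, pairSum (fun x y => if φ {x, y} = a then 1 else 0) A B ≤ A.card * B.card := by
    have : ∑ a ∈ Φ, pairSum (fun x y => if φ {x, y} = a then 1 else 0) A B
        = pairSum (fun x y => ∑ a ∈ Φ, if φ {x, y} = a then 1 else 0) A B := by
      unfold pairSum
      rw [sum_comm]
      exact sum_congr rfl fun x _ => sum_comm
    rw [this]
    refine pairSum_le (fun x y => ?_) A B
    rw [sum_ite_eq]
    split_ifs <;> norm_num
  have h2 : ∑ a ∈ Φ, (p a * ((A.card : ℝ) * B.card) - ε * (A.card * B.card))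
      ≤ ∑ a ∈ Φ, pairSum (fun x y => if φ {x, y} = a then 1 else 0) A B := by
    refine sum_le_sum fun a ha => ?_
    have := (abs_le.1 (h a ha A subset_rfl B subset_rfl)).1
    linarith
  rw [sum_sub_distrib, ← sum_mul, sum_const, nsmul_eq_mul] at h2
  refine le_of_mul_le_mul_right (a := (A.card : ℝ) * B.card) ?_ (by positivity)
  linarith

lemma le_add_of_floor_eq {x y ε : ℝ} {K : ℕ} (hε : 0 < ε) (hK : 1 / ε < K) (hy : 0 ≤ y)
    (h : ⌊x * K⌋₊ = ⌊y * K⌋₊) : x ≤ y + ε := by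
  have hK0 : (0 : ℝ) < K := lt_trans (by positivity) hK
  have h1 := Nat.lt_floor_add_one (x * K)
  have h2 := Nat.floor_le (a := y * K) (by positivity)
  rw [h] at h1
  rw [div_lt_iff₀ hε] at hK
  refine le_of_mul_le_mul_right (a := (K : ℝ)) ?_ hK0
  linarith

/-- For every palette 𝒫 and ν > 0 there are C > 0 and N ∈ ℕ such that any
3-graph on n > N vertices satisfying 𝒫 which is (d,η,▽)-dense has d ≤ Λ^▽_𝒫 + Cη + ν. -/
theorem palette_upper_bound_VVV (P : Palette) (ν : ℝ) (hν : 0 < ν) :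
    ∃ C : ℝ, 0 < C ∧ ∃ N : ℕ, ∀ H : ThreeGraph, N < H.verts.card →
      Satisfies H P → ∀ d η : ℝ, 0 ≤ d → d ≤ 1 → 0 < η →
      IsDenseVVV H d η → d ≤ LambdaVVV P + C * η + ν := by
  obtain ⟨Φ, hΦ⟩ : ∃ Φ, Φ = palColours P := ⟨_, rfl⟩
  obtain ⟨ε, hε, hε1, hε2, hε3⟩ : ∃ ε : ℝ, 0 < ε ∧ ε ≤ 1 ∧ 2 * (Φ.card * ε) ≤ 1 ∧
      P.card * (14 * (Φ.card * ε) + 7 * ε) ≤ ν := by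
    refine ⟨min (1 / (2 * Φ.card + 1)) (ν / (P.card * (14 * Φ.card + 7) + 1)),
      lt_min (by positivity) (by positivity), ?_, ?_, ?_⟩
    · refine (min_le_left _ _).trans ?_
      rw [div_le_one (by positivity)]
      linarith [Nat.cast_nonneg (α := ℝ) Φ.card]
    · have h1 := min_le_left (1 / (2 * (Φ.card : ℝ) + 1)) (ν / (P.card * (14 * Φ.card + 7) + 1))
      have h2 : 2 * (Φ.card : ℝ) * (1 / (2 * Φ.card + 1)) ≤ 1 := by
        rw [mul_one_div, div_le_one (by positivity)]
        linarith
      rw [← mul_assoc]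
      refine le_trans ?_ h2
      gcongr
    · have h1 := min_le_right (1 / (2 * (Φ.card : ℝ) + 1)) (ν / (P.card * (14 * Φ.card + 7) + 1))
      have h2 : (P.card : ℝ) * (14 * Φ.card + 7) * (ν / (P.card * (14 * Φ.card + 7) + 1)) ≤ ν := by
        rw [mul_div_assoc', div_le_iff₀ (by positivity)]
        linarith
      refine le_trans ?_ h2
      rw [← mul_assoc, ← add_mul, ← mul_assoc]
      gcongr
  obtain ⟨K, hK⟩ := exists_nat_gt (1 / ε)
  -- Density vectors are rounded to multiples of `1 / K` to make them colours for Ramsey's theorem.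
  obtain ⟨m, hm⟩ := exists_mono_triangle (κ := Φ → Fin (K + 1))
    (univ : Finset (Φ → Fin (K + 1))).card
  obtain ⟨M, hM⟩ : ∃ M, M = m + 1 := ⟨_, rfl⟩
  obtain ⟨T, hT⟩ : ∃ T, T = (range M ×ˢ range M ×ˢ Φ).filter fun t => t.1 < t.2.1 := ⟨_, rfl⟩
  obtain ⟨δ, hδ, hδ1, hreg⟩ := exists_cutReg_family T (fun t ht => by
    rw [hT, mem_filter] at ht
    exact ht.2.ne) ε hε
  have hM0 : 0 < M := by omega
  have hM0' : (0 : ℝ) < M := by exact_mod_cast hM0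
  obtain ⟨c, hc⟩ : ∃ c : ℝ, c = δ / (2 * M) := ⟨_, rfl⟩
  have hc0 : 0 < c := by rw [hc]; positivity
  refine ⟨1 / c ^ 3, by positivity, M, fun H hn hsat d η hd0 hd1 hη hdense => ?_⟩
  obtain ⟨ord, φ, hord, -, hφ⟩ := hsat
  obtain ⟨n, hnd⟩ : ∃ n, n = H.verts.card := ⟨_, rfl⟩
  rw [← hnd] at hn
  obtain ⟨L, hL⟩ : ∃ L, L = n / M := ⟨_, rfl⟩
  have hL1 : 1 ≤ L := by
    rw [hL]
    exact (Nat.one_le_div_iff hM0).2 hn.le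
  have hnL : (n : ℝ) ≤ 2 * M * L := by
    have h1 : n < M * (L + 1) := by
      rw [hL]
      exact Nat.lt_mul_div_succ n hM0
    have h2 : n ≤ 2 * M * L := by nlinarith
    exact_mod_cast h2
  obtain ⟨B, hBsub, hBcard, hBord⟩ := exists_ordered_blocks H.verts ord hord M L (by
    rw [hL, ← hnd]
    exact Nat.mul_div_le n M)
  obtain ⟨A, hAsub, hAcard, hA⟩ := hreg (fun a x y => if φ {x, y} = a then 1 else 0)
    (fun a x y => by split_ifs <;> norm_num)
    (fun a x y => by split_ifs <;> norm_num)
    (fun i => if i < M then B i else {0}) (fun i => by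
      by_cases hi : i < M
      · rw [if_pos hi]
        exact card_pos.1 (by rw [hBcard i hi]; omega)
      · simp [hi])
  have hAB : ∀ i < M, A i ⊆ B i := fun i hi => by
    have := hAsub i
    rwa [if_pos hi] at this
  have hAc : ∀ i < M, c * n ≤ (A i).card := fun i hi => by
    have h1 := hAcard i
    rw [if_pos hi, hBcard i hi] at h1
    refine le_trans ?_ h1
    calc c * n ≤ c * (2 * M * L) := by gcongr
      _ = δ * L := by
        rw [hc]
        field_simp
  choose! p hp0 hp1 hp using hA
  have memT : ∀ i j a, i < j → j < M → a ∈ Φ → (i, j, a) ∈ T := by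
    intro i j a hij hj ha
    rw [hT, mem_filter, mem_product, mem_product, mem_range, mem_range]
    exact ⟨⟨hij.trans hj, hj, ha⟩, hij⟩
  obtain ⟨i, hi, j, hj, k, hk, hij, hjk, e1, e2⟩ := hm univ le_rfl
    (fun i j a => ⟨min K ⌊p (i, j, a) * K⌋₊, by omega⟩) (range M) (by rw [card_range]; omega)
    (fun _ _ _ _ _ => mem_univ _)
  rw [mem_range] at hi hj hk
  have hfloor : ∀ i j a, i < j → j < M → a ∈ Φ → ⌊p (i, j, a) * K⌋₊ ≤ K := by
    intro i j a hij hj ha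
    refine Nat.floor_le_of_le ?_
    exact mul_le_of_le_one_left (by positivity) (hp1 _ (memT i j a hij hj ha))
  have q1 : ∀ a ∈ Φ, p (j, k, a) ≤ p (i, j, a) + ε := by
    intro a ha
    have := congrArg Fin.val (congrFun e1 ⟨a, ha⟩)
    simp only [min_eq_right (hfloor j k a hjk hk ha), min_eq_right (hfloor i j a hij hj ha)] at this
    exact le_add_of_floor_eq hε hK (hp0 _ (memT i j a hij hj ha)) this
  have q2 : ∀ a ∈ Φ, p (i, k, a) ≤ p (i, j, a) + ε := by
    intro a ha
    have := congrArg Fin.val (congrFun e2 ⟨a, ha⟩)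
    simp only [min_eq_right (hfloor i k a (hij.trans hjk) hk ha),
      min_eq_right (hfloor i j a hij hj ha)] at this
    exact le_add_of_floor_eq hε hK (hp0 _ (memT i j a hij hj ha)) this
  have hn0 : (0 : ℝ) < n := by
    have : 0 < n := by omega
    exact_mod_cast this
  have hpos : ∀ i < M, (0 : ℝ) < (A i).card := fun i hi =>
    lt_of_lt_of_le (by positivity) (hAc i hi)
  have hne : ∀ i < M, (A i).Nonempty := fun i hi => card_pos.1 (by exact_mod_cast hpos i hi)
  have hsubV : ∀ i < M, A i ⊆ H.verts := fun i hi => (hAB i hi).trans (hBsub i hi)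
  have hq0 : ∀ a ∈ palColours P, 0 ≤ p (i, j, a) + ε ∧ p (i, j, a) + ε ≤ 2 := by
    intro a ha
    rw [← hΦ] at ha
    have h1 := hp0 _ (memT i j a hij hj ha)
    have h2 := hp1 _ (memT i j a hij hj ha)
    exact ⟨by linarith, by linarith⟩
  have hup := eVVV_le (H := H) (q := fun a => p (i, j, a) + ε) hφ
    (fun x hx y hy => hBord i j hij hj x (hAB i hi hx) y (hAB j hj hy))
    (fun x hx y hy => hBord j k hjk hk x (hAB j hj hx) y (hAB k hk hy)) hε.le hq0
    (fun a ha => (hp _ (memT i j a hij hj (hΦ ▸ ha))).upper (by linarith))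
    (fun a ha => (hp _ (memT j k a hjk hk (hΦ ▸ ha))).upper (q1 a (hΦ ▸ ha)))
    (fun a ha => (hp _ (memT i k a (hij.trans hjk) hk (hΦ ▸ ha))).upper (q2 a (hΦ ▸ ha)))
  have hlow := hdense (A i) (A j) (A k) (hsubV i hi) (hsubV j hj) (hsubV k hk)
  rw [← hnd] at hlow
  have hsum : ∑ a ∈ Φ, (p (i, j, a) + ε) ≤ 1 + 2 * (Φ.card * ε) := by
    rw [sum_add_distrib, sum_const, nsmul_eq_mul]
    have := sum_density_le (hne i hi) (hne j hj) (fun a ha => hp _ (memT i j a hij hj ha))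
    linarith
  have hsum0 : 0 ≤ ∑ a ∈ Φ, (p (i, j, a) + ε) := sum_nonneg fun a ha => (hq0 a (hΦ ▸ ha)).1
  have hlam : lamVVV P (fun a => p (i, j, a) + ε) ≤ LambdaVVV P + P.card * (14 * (Φ.card * ε)) := by
    have hΛ := LambdaVVV_nonneg P
    have hΛ' := LambdaVVV_le_card P
    have ht : 0 ≤ (Φ.card : ℝ) * ε := by positivity
    refine (lamVVV_le fun a ha => (hq0 a ha).1).trans ?_
    rw [← hΦ]
    calc LambdaVVV P * (∑ a ∈ Φ, (p (i, j, a) + ε)) ^ 3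
        ≤ LambdaVVV P * (1 + 2 * (Φ.card * ε)) ^ 3 := by gcongr
      _ ≤ LambdaVVV P * (1 + 14 * (Φ.card * ε)) := by
          gcongr
          -- `(1 + u) ^ 3 ≤ 1 + 7 * u` for `0 ≤ u ≤ 1`
          generalize (Φ.card : ℝ) * ε = u at ht hε2
          have h2 : u ^ 2 ≤ u / 2 := by nlinarith
          have h3 : u ^ 3 ≤ u / 4 := by nlinarith
          nlinarith
      _ = LambdaVVV P + LambdaVVV P * (14 * (Φ.card * ε)) := by ring
      _ ≤ _ := by gcongr
  have hV : (c * n) ^ 3 ≤ (A i).card * (A j).card * (A k).card := by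
    calc (c * n) ^ 3 = c * n * (c * n) * (c * n) := by ring
      _ ≤ _ := by
        gcongr
        · exact hAc i hi
        · exact hAc j hj
        · exact hAc k hk
  have hV0 : (0 : ℝ) < (A i).card * (A j).card * (A k).card := by
    have := hpos i hi
    have := hpos j hj
    have := hpos k hk
    positivity
  rw [ge_iff_le, show d * ((A i).card : ℝ) * (A j).card * (A k).card
    = d * ((A i).card * (A j).card * (A k).card) by ring] at hlow
  generalize ((A i).card : ℝ) * (A j).card * (A k).card = V at hup hlow hV hV0
  have hη' : η * (n : ℝ) ^ 3 ≤ 1 / c ^ 3 * η * V := by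
    calc η * (n : ℝ) ^ 3 = 1 / c ^ 3 * η * (c * n) ^ 3 := by
          field_simp
      _ ≤ _ := by gcongr
  refine le_of_mul_le_mul_right (a := V) ?_ hV0
  have hfin : (lamVVV P (fun a => p (i, j, a) + ε) + P.card * (7 * ε)) * V
      ≤ (LambdaVVV P + ν) * V :=
    mul_le_mul_of_nonneg_right (by linarith) hV0.le
  linarith
end
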